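/- Let S be a commutative ring with a ring endomorphism σ, and let R be a subring of S with σ(R) ⊆ R. Assume: (i) S is finitely σ-generated over R, i.e., there is a finite subset T ⊆ S such that S is generated as an R-algebra by {σ^n(x) | x ∈ T, n ≥ 0}; (ii) R is an integral domain and σ restricted to R is injective; and (iii) the zero ideal of S is a finite intersection of σ-pseudo prime ideals of S. Then there exist a nonzero element r ∈ R and an integer l ≥ 1 such that for every d ≥ 1 and every prime ideal q of R satisfying (σ^d)^{-1}(q) ∩ R = q and σ^n(r) ∉ q for all n ≥ 0, there exists a prime ideal q' of S with (σ^{ld})^{-1}(q') = q' and q' ∩ R = q. -/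

import Mathlib

/-- An ideal `p` of a ring with endomorphism `σ` is `σ`-pseudo prime if
`p = q ∩ σ⁻¹(q) ∩ … ∩ σ^{-(d-1)}(q)` for some `d ≥ 1` and some `σ^d`-prime ideal `q`
(i.e. a prime ideal `q` with `(σ^d)⁻¹(q) = q`). -/
def PseudoPrime {R : Type*} [CommRing R] (σ : R →+* R) (p : Ideal R) : Prop :=
  ∃ d : ℕ, 1 ≤ d ∧ ∃ q : Ideal R, q.IsPrime ∧ Ideal.comap (σ ^ d) q = q ∧
    p = ⨅ i ∈ Finset.range d, Ideal.comap (σ ^ i) q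

/-!
Modulo a prime ideal of `S` that is invariant under a power of `σ` and contracts to `0` in `R`, and
adding one generator at a time, `S` is a domain generated over `R` by an orbit `y 0, y 1, …`. If
the orbit is algebraically independent, prime ideals of `R` are extended through the coefficients.
Otherwise, after dropping initial terms, all windows of `n` consecutive terms are independent while
`y n` is algebraic over the preceding ones. For `q` avoiding the orbit of a suitable `r`, a
valuation ring dominating the localization at the extension of `q` to the first window provides a
prime ideal `Q` of `S` over `q` modulo which every window stays independent. Hence the pullbacks of
`Q` along powers of `σ ^ d` agree on the first window, so by finiteness of the number of roots two
of them, at bounded distance, agree on any given longer finite window. Finally, a relation of least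
degree among those for all later terms has only minimal translates, and therefore a sequence in an
algebraically closed field that continues the finite window periodically satisfies all relations
of `y`; the kernel of the resulting homomorphism is the periodic prime ideal sought.
-/

open Polynomial

universe u

section Evaluation

variable {R S R' S' ι : Type*} [CommRing R] [CommRing S] [Algebra R S] [CommRing R'] [CommRing S']
  [Algebra R' S']

theorem map_aeval_of_semilinear {σ : R →+* R'} {θ : S →+* S'}
    (hθ : ∀ r, θ (algebraMap R S r) = algebraMap R' S' (σ r)) (z : ι → S) (p : MvPolynomial ι R) :
    θ (MvPolynomial.aeval z p) = MvPolynomial.aeval (θ ∘ z) (MvPolynomial.map σ p) := by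
  have h : θ.comp (algebraMap R S) = (algebraMap R' S').comp σ := RingHom.ext hθ
  rw [MvPolynomial.map_aeval, h, MvPolynomial.aeval_def, MvPolynomial.eval₂_map]
  rfl

/-- The evaluation of a polynomial in one variable over `R[X_i : i ∈ ι]` which sends the `X_i` to
`z i` and the distinguished variable to `x`. -/
noncomputable def evalOver (z : ι → S) (x : S) : (MvPolynomial ι R)[X] →+* S :=
  eval₂RingHom (MvPolynomial.aeval z : MvPolynomial ι R →ₐ[R] S) x

theorem evalOver_C (z : ι → S) (x : S) (p : MvPolynomial ι R) :
    evalOver z x (C p) = MvPolynomial.aeval z p :=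
  eval₂_C _ _

theorem evalOver_X (z : ι → S) (x : S) : evalOver (R := R) z x X = x :=
  eval₂_X _ _

theorem map_evalOver_of_semilinear {σ : R →+* R'} {θ : S →+* S'}
    (hθ : ∀ r, θ (algebraMap R S r) = algebraMap R' S' (σ r)) (z : ι → S) (x : S)
    (f : (MvPolynomial ι R)[X]) :
    θ (evalOver z x f) = evalOver (θ ∘ z) (θ x) (f.map (MvPolynomial.map σ)) := by
  have h : θ.comp (evalOver z x) =
      (evalOver (θ ∘ z) (θ x)).comp (Polynomial.mapRingHom (MvPolynomial.map σ)) :=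
    Polynomial.ringHom_ext (fun p ↦ by simp [evalOver_C, map_aeval_of_semilinear hθ])
      (by simp [evalOver_X])
  exact congrArg (· f) h

/-- The evaluation at `z` as a map onto the subalgebra generated by the `z i`. -/
noncomputable def aevalAdjoin (z : ι → S) :
    MvPolynomial ι R →+* Algebra.adjoin R (Set.range z) :=
  ((MvPolynomial.aeval z).codRestrict _ fun p ↦
    (Algebra.adjoin_range_eq_range_aeval R z).ge ⟨p, rfl⟩ :
      MvPolynomial ι R →ₐ[R] Algebra.adjoin R (Set.range z))

theorem aevalAdjoin_surjective (z : ι → S) :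
    Function.Surjective (aevalAdjoin z : MvPolynomial ι R →+* _) := by
  rintro ⟨a, ha⟩
  obtain ⟨p, hp⟩ := (Algebra.adjoin_range_eq_range_aeval R z).le ha
  exact ⟨p, Subtype.ext hp⟩

theorem aeval_map_aevalAdjoin (z : ι → S) (x : S) (f : (MvPolynomial ι R)[X]) :
    aeval x (f.map (aevalAdjoin z)) = evalOver z x f := by
  rw [aeval_def, eval₂_map]
  rfl

theorem isAlgebraic_of_evalOver_eq_zero {z : ι → S} {x : S} {f : (MvPolynomial ι R)[X]}
    (hf : evalOver z x f = 0) {k : ℕ} (hk : MvPolynomial.aeval z (f.coeff k) ≠ 0) :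
    IsAlgebraic (Algebra.adjoin R (Set.range z)) x := by
  refine ⟨_, fun h ↦ hk ?_, (aeval_map_aevalAdjoin z x f).trans hf⟩
  exact congrArg Subtype.val ((coeff_map _ k).symm.trans (by rw [h, coeff_zero]))

theorem exists_evalOver_eq_zero_leadingCoeff {z : ι → S} {x : S}
    (hx : IsAlgebraic (Algebra.adjoin R (Set.range z)) x) :
    ∃ f : (MvPolynomial ι R)[X], evalOver z x f = 0 ∧
      MvPolynomial.aeval z f.leadingCoeff ≠ 0 := by
  obtain ⟨g, hg, hgx⟩ := hx
  obtain ⟨f, rfl, hdeg⟩ := exists_natDegree_eq_of_mem_lifts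
    (mem_lifts_of_surjective (aevalAdjoin_surjective z) g)
  refine ⟨f, (aeval_map_aevalAdjoin z x f).symm.trans hgx, fun h ↦ hg ?_⟩
  rw [← leadingCoeff_eq_zero, leadingCoeff, ← hdeg, coeff_map]
  exact Subtype.ext h

theorem exists_evalOver_eq_zero_coeff_zero [IsDomain S] {z : ι → S} {x : S}
    (hx : IsAlgebraic (Algebra.adjoin R (Set.range z)) x) (hx0 : x ≠ 0) :
    ∃ f : (MvPolynomial ι R)[X], evalOver z x f = 0 ∧ MvPolynomial.aeval z (f.coeff 0) ≠ 0 := by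
  obtain ⟨g, hg, hgx⟩ :=
    hx.exists_nonzero_coeff_and_aeval_eq_zero (mem_nonZeroDivisors_of_ne_zero hx0)
  obtain ⟨f, rfl⟩ := map_surjective (aevalAdjoin z) (aevalAdjoin_surjective z) g
  refine ⟨f, (aeval_map_aevalAdjoin z x f).symm.trans hgx, fun h ↦ hg ?_⟩
  rw [coeff_map]
  exact Subtype.ext h

end Evaluation

section Exchange

variable {R S : Type*} [CommRing R] [CommRing S] [Algebra R S] {n : ℕ} {z : Fin (n + 1) → S}

theorem algebraicIndependent_iff_transcendental_last (h : AlgebraicIndependent R (Fin.init z)) :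
    AlgebraicIndependent R z ↔
      Transcendental (Algebra.adjoin R (Set.range (Fin.init z))) (z (Fin.last n)) := by
  rw [← h.option_iff_transcendental]
  refine algebraicIndependent_equiv' finSuccEquivLast (funext fun i ↦ ?_)
  induction i using Fin.lastCases <;> simp [Fin.init]

theorem algebraicIndependent_iff_transcendental_zero (h : AlgebraicIndependent R (Fin.tail z)) :
    AlgebraicIndependent R z ↔
      Transcendental (Algebra.adjoin R (Set.range (Fin.tail z))) (z 0) := by
  rw [← h.option_iff_transcendental]
  refine algebraicIndependent_equiv' (finSuccEquiv n) (funext fun i ↦ ?_)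
  induction i using Fin.cases <;> simp [Fin.tail]

theorem algebraicIndependent_tail_of_init [IsDomain S] (h : AlgebraicIndependent R (Fin.init z))
    (h0 : IsAlgebraic (Algebra.adjoin R (Set.range (Fin.tail z))) (z 0)) :
    AlgebraicIndependent R (Fin.tail z) := by
  cases n with
  | zero => convert! h using 1
  | succ n =>
    have hmid : AlgebraicIndependent R (Fin.tail (Fin.init z)) :=
      h.comp Fin.succ (Fin.succ_injective n)
    rw [algebraicIndependent_iff_transcendental_zero hmid] at h
    refine (algebraicIndependent_iff_transcendental_last (z := Fin.tail z) hmid).mpr fun hlast ↦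
      h (h0.adjoin_of_forall_isAlgebraic ?_)
    rintro _ ⟨⟨i, rfl⟩, hi⟩
    induction i using Fin.lastCases with
    | last => exact hlast
    | cast i => exact absurd ⟨i, rfl⟩ hi

end Exchange

section Generic

variable {R B ι : Type*} [CommRing R] [CommRing B] [Algebra R B]

/-- The tuple `z` is generic modulo the ideal `Q`: a polynomial expression in the `z i` lies in `Q`
only if all its coefficients do. For `Q` prime this says that the images of the `z i` in `B ⧸ Q`
are algebraically independent over the image of `R`. -/
def IsGenericAlong (R : Type*) {B ι : Type*} [CommRing R] [CommRing B] [Algebra R B]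
    (z : ι → B) (Q : Ideal B) : Prop :=
  ∀ p : MvPolynomial ι R, MvPolynomial.aeval z p ∈ Q → ∀ d, algebraMap R B (p.coeff d) ∈ Q

theorem aeval_mem_of_coeff_mem (z : ι → B) {Q : Ideal B} {p : MvPolynomial ι R}
    (h : ∀ d, algebraMap R B (p.coeff d) ∈ Q) : MvPolynomial.aeval z p ∈ Q := by
  rw [MvPolynomial.aeval_def, MvPolynomial.eval₂_eq]
  exact Q.sum_mem fun d _ ↦ Q.mul_mem_right _ (h d)

theorem isGenericAlong_iff_algebraicIndependent {z : ι → B} {Q : Ideal B} :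
    IsGenericAlong R z Q ↔
      AlgebraicIndependent (R ⧸ Q.under R) fun i ↦ Ideal.Quotient.mk Q (z i) := by
  have hmk (r : R) := (Ideal.Quotient.algebraMap_mk_of_liesOver Q (Q.under R) r).symm
  have haeval (p : MvPolynomial ι R) : MvPolynomial.aeval (fun i ↦ Ideal.Quotient.mk Q (z i))
      (MvPolynomial.map (Ideal.Quotient.mk (Q.under R)) p) = 0 ↔ MvPolynomial.aeval z p ∈ Q := by
    rw [← Ideal.Quotient.eq_zero_iff_mem, map_aeval_of_semilinear hmk z p]
    rfl
  have hmap (p : MvPolynomial ι R) : MvPolynomial.map (Ideal.Quotient.mk (Q.under R)) p = 0 ↔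
      ∀ d, algebraMap R B (p.coeff d) ∈ Q := by
    simp [MvPolynomial.ext_iff, MvPolynomial.coeff_map, Ideal.Quotient.eq_zero_iff_mem]
  rw [algebraicIndependent_iff, (MvPolynomial.map_surjective _ Ideal.Quotient.mk_surjective).forall]
  simp only [haeval, hmap]
  rfl

theorem IsGenericAlong.tail_of_init {n : ℕ} {z : Fin (n + 1) → B} {Q : Ideal B} [Q.IsPrime]
    (h : IsGenericAlong R (Fin.init z) Q) {f : (MvPolynomial (Fin n) R)[X]}
    (hf : evalOver (Fin.tail z) (z 0) f = 0) {k : ℕ}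
    (hk : MvPolynomial.aeval (Fin.tail z) (f.coeff k) ∉ Q) : IsGenericAlong R (Fin.tail z) Q := by
  rw [isGenericAlong_iff_algebraicIndependent] at h ⊢
  have hmk (r : R) := (Ideal.Quotient.algebraMap_mk_of_liesOver Q (Q.under R) r).symm
  refine algebraicIndependent_tail_of_init (z := Ideal.Quotient.mk Q ∘ z) h
    (isAlgebraic_of_evalOver_eq_zero (k := k)
      (f := f.map (MvPolynomial.map (Ideal.Quotient.mk (Q.under R)))) ?_ ?_)
  · exact (map_evalOver_of_semilinear hmk _ _ f).symm.trans (congrArg _ hf |>.trans (map_zero _))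
  · rw [coeff_map]
    exact fun h0 ↦ hk (Ideal.Quotient.eq_zero_iff_mem.mp
      ((map_aeval_of_semilinear hmk _ _).trans h0))

theorem mem_ker_map_mk_iff {q : Ideal R} {p : MvPolynomial ι R} :
    p ∈ RingHom.ker (MvPolynomial.map (σ := ι) (Ideal.Quotient.mk q)) ↔ ∀ d, p.coeff d ∈ q := by
  simp [RingHom.mem_ker, MvPolynomial.ext_iff, MvPolynomial.coeff_map,
    Ideal.Quotient.eq_zero_iff_mem]

end Generic

section Domination

theorem exists_valuationSubring_mem_nonunits_iff {A K : Type*} [CommRing A] [Field K] {φ : A →+* K}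
    (hφ : Function.Injective φ) (P : Ideal A) [P.IsPrime] :
    ∃ V : ValuationSubring K, ∀ a, φ a ∈ V ∧ (φ a ∈ V.nonunits ↔ a ∈ P) := by
  have hunit (a : P.primeCompl) : IsUnit (φ a) := by
    refine ((map_ne_zero_iff φ hφ).mpr fun h ↦ a.2 ?_).isUnit
    rw [h]
    exact P.zero_mem
  let loc : Localization.AtPrime P →+* K := IsLocalization.lift hunit
  obtain ⟨V, hV, hloc⟩ := IsLocalRing.exists_factor_valuationRing loc
  have hmk (a : A) : loc (algebraMap A _ a) = φ a := IsLocalization.lift_eq hunit a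
  refine ⟨V, fun a ↦ ⟨hmk a ▸ hV _, ?_⟩⟩
  have h : φ a ∈ V.nonunits ↔ algebraMap A (Localization.AtPrime P) a ∈ nonunits _ := by
    rw [mem_nonunits_iff, ← isUnit_map_iff (loc.codRestrict V.toSubring hV), ← hmk a]
    exact ValuationSubring.coe_mem_nonunits_iff (A := V) (a := loc.codRestrict V.toSubring hV _)
  rw [h, ← IsLocalRing.mem_maximalIdeal, IsLocalization.AtPrime.to_map_mem_maximal_iff _ P]

theorem mem_of_aeval_eq_zero_of_isUnit_leadingCoeff {V K : Type*} [CommRing V] [IsDomain V]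
    [IsIntegrallyClosed V] [Field K] [Algebra V K] [IsFractionRing V K] {f : V[X]} {x : K}
    (hx : aeval x f = 0) (hf : IsUnit f.leadingCoeff) : x ∈ (algebraMap V K).range := by
  obtain ⟨u, hu⟩ := hf
  obtain ⟨v, hv⟩ := IsIntegrallyClosed.isIntegral_iff.mp (isIntegral_leadingCoeff_smul f x hx)
  refine ⟨↑u⁻¹ * v, ?_⟩
  rw [map_mul, hv, ← hu, ← Algebra.smul_def, smul_smul, Units.inv_mul, one_smul]

/-- The pair `(B, Q)` is the trace on `S` of a valuation ring of the fraction field of `S` that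
dominates the localization of `A` at `P`. -/
theorem exists_subalgebra_comap_codRestrict_eq {R A S : Type*} [CommRing R] [CommRing A]
    [CommRing S] [IsDomain S] [Algebra R A] [Algebra R S] {φ : A →ₐ[R] S}
    (hφ : Function.Injective φ) (P : Ideal A) [P.IsPrime] :
    ∃ (B : Subalgebra R S) (hB : ∀ a, φ a ∈ B) (Q : Ideal B), Q.IsPrime ∧
      Q.comap (φ.codRestrict B hB) = P ∧
      ∀ (f : B[X]) (x : S), aeval x f = 0 → f.leadingCoeff ∉ Q → x ∈ B := by
  let K := FractionRing S
  obtain ⟨V, hV⟩ := exists_valuationSubring_mem_nonunits_iff (φ := (algebraMap S K).comp φ)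
    ((IsFractionRing.injective S K).comp hφ) P
  let B : Subalgebra R S :=
    { V.toSubring.comap (algebraMap S K) with
      algebraMap_mem' := fun r ↦ by
        simpa using (hV (algebraMap R A r)).1 }
  let ι : B →+* V := ((algebraMap S K).comp B.val.toRingHom).codRestrict V.toSubring fun b ↦ b.2
  have hι (b : B) : ι b ∈ IsLocalRing.maximalIdeal V ↔ algebraMap S K b ∈ V.nonunits := by
    exact ValuationSubring.coe_mem_nonunits_iff.symm
  refine ⟨B, fun a ↦ (hV a).1, (IsLocalRing.maximalIdeal V).comap ι, inferInstance,
    Ideal.ext fun a ↦ (hι _).trans (hV a).2, fun f x hx hf ↦ ?_⟩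
  rw [Ideal.mem_comap, IsLocalRing.mem_maximalIdeal, mem_nonunits_iff, not_not] at hf
  have hroot : aeval (algebraMap S K x) (f.map ι) = 0 := by
    rw [aeval_def, eval₂_map]
    exact (hom_eval₂ f _ (algebraMap S K) x).symm.trans <|
      (congrArg (algebraMap S K) hx).trans (map_zero _)
  obtain ⟨v, hv⟩ := mem_of_aeval_eq_zero_of_isUnit_leadingCoeff hroot
    (leadingCoeff_map_of_leadingCoeff_ne_zero ι hf.ne_zero ▸ hf)
  exact (congrArg (· ∈ V) hv).mp v.2

end Domination

section Window

variable {S : Type*} {y : ℕ → S}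

/-- The `n` consecutive terms of the sequence `y` that start at `y j`. -/
abbrev window (y : ℕ → S) (n j : ℕ) : Fin n → S :=
  fun i ↦ y (i + j)

theorem range_window_mono {k m : ℕ} (hkm : k ≤ m) :
    Set.range (window y k 0) ⊆ Set.range (window y m 0) := by
  rintro _ ⟨i, rfl⟩
  exact ⟨Fin.castLE hkm i, rfl⟩

end Window

theorem pow_apply_of_semiconj {R S : Type*} [CommRing R] [CommRing S] {σ : R →+* R} {τ : S →+* S}
    {f : R →+* S} (hf : ∀ r, τ (f r) = f (σ r)) (j : ℕ) (r : R) :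
    (τ ^ j) (f r) = f ((σ ^ j) r) := by
  simp only [RingHom.coe_pow]
  exact (Function.Semiconj.iterate_right (f := f) (fun r ↦ (hf r).symm) j r).symm

section Shift

variable {R S : Type*} [CommRing R] [CommRing S] [Algebra R S] {σ : R →+* R} {τ : S →+* S}
  {y : ℕ → S}

/-- The endomorphism `τ` extends `σ` and shifts the sequence `y`, so that `y` is the orbit of `y 0`
under `τ`. -/
structure IsShift (σ : R →+* R) (τ : S →+* S) (y : ℕ → S) : Prop where
  map_algebraMap : ∀ r, τ (algebraMap R S r) = algebraMap R S (σ r)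
  map_gen : ∀ k, τ (y k) = y (k + 1)

namespace IsShift

variable (h : IsShift σ τ y)
include h

theorem pow_gen (j k : ℕ) : (τ ^ j) (y k) = y (k + j) := by
  induction j with
  | zero => rfl
  | succ j ih => rw [pow_succ', RingHom.mul_def, RingHom.comp_apply, ih, h.map_gen, add_assoc]

theorem pow_aeval_window {n : ℕ} (j i : ℕ) (p : MvPolynomial (Fin n) R) :
    (τ ^ j) (MvPolynomial.aeval (window y n i) p) =
      MvPolynomial.aeval (window y n (i + j)) (MvPolynomial.map (σ ^ j) p) := by
  rw [map_aeval_of_semilinear (pow_apply_of_semiconj h.map_algebraMap j)]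
  congr 2
  exact funext fun k ↦ (h.pow_gen j _).trans (by rw [add_assoc])

theorem pow_evalOver_window {n : ℕ} (j i : ℕ) (x : S) (f : (MvPolynomial (Fin n) R)[X]) :
    (τ ^ j) (evalOver (window y n i) x f) =
      evalOver (window y n (i + j)) ((τ ^ j) x) (f.map (MvPolynomial.map (σ ^ j))) := by
  rw [map_evalOver_of_semilinear (pow_apply_of_semiconj h.map_algebraMap j)]
  congr 2
  exact funext fun k ↦ (h.pow_gen j _).trans (by rw [add_assoc])

end IsShift

end Shift

section GenericPrime

theorem notMem_of_evalOver_eq_zero {R B ι : Type*} [CommRing R] [CommRing B] [Algebra R B]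
    {z : ι → B} {u : B} {Q : Ideal B} (hz : IsGenericAlong R z Q) {g : (MvPolynomial ι R)[X]}
    (hg : evalOver z u g = 0) {d : ι →₀ ℕ} (hd : algebraMap R B ((g.coeff 0).coeff d) ∉ Q) :
    u ∉ Q := by
  intro hu
  rw [← divX_mul_X_add g, map_add, map_mul, evalOver_X, evalOver_C] at hg
  refine hd (hz _ ?_ d)
  rw [eq_neg_of_add_eq_zero_right hg]
  exact Q.neg_mem (Q.mul_mem_left _ hu)

variable {R S : Type*} [CommRing R] [CommRing S] [Algebra R S] {σ : R →+* R} {τ : S →+* S}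
  {y : ℕ → S} {n : ℕ} (h : IsShift σ τ y)

theorem val_evalOver {ι : Type*} {B : Subalgebra R S} {Z : ι → B} {z : ι → S}
    (hZ : ∀ i, (Z i : S) = z i) (x : B) (f : (MvPolynomial ι R)[X]) :
    (evalOver Z x f : S) = evalOver z x f := by
  obtain rfl : (fun i ↦ (Z i : S)) = z := funext hZ
  refine (map_evalOver_of_semilinear (σ := RingHom.id R) (θ := B.val.toRingHom)
    (fun _ ↦ rfl) Z x f).trans ?_
  rw [show MvPolynomial.map (RingHom.id R) = RingHom.id (MvPolynomial ι R) from
    RingHom.ext MvPolynomial.map_id, Polynomial.map_id]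
  rfl

theorem val_aeval {ι : Type*} {B : Subalgebra R S} {Z : ι → B} {z : ι → S}
    (hZ : ∀ i, (Z i : S) = z i) (p : MvPolynomial ι R) :
    (MvPolynomial.aeval Z p : S) = MvPolynomial.aeval z p := by
  obtain rfl : (fun i ↦ (Z i : S)) = z := funext hZ
  exact MvPolynomial.comp_aeval_apply _ B.val p

theorem exists_subalgebra_isGenericAlong [IsDomain S] {ι : Type*} {z : ι → S}
    (hz : AlgebraicIndependent R z) (q : Ideal R) [q.IsPrime] :
    ∃ (B : Subalgebra R S) (Q : Ideal B), Q.IsPrime ∧ Q.under R = q ∧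
      (∃ Z : ι → B, (∀ i, (Z i : S) = z i) ∧ IsGenericAlong R Z Q) ∧
      ∀ (f : B[X]) (x : S), aeval x f = 0 → f.leadingCoeff ∉ Q → x ∈ B := by
  let P := RingHom.ker (MvPolynomial.map (σ := ι) (Ideal.Quotient.mk q))
  have : P.IsPrime := RingHom.ker_isPrime _
  obtain ⟨B, hB, Q, hQ, hcomap, hroot⟩ :=
    exists_subalgebra_comap_codRestrict_eq (φ := MvPolynomial.aeval z) hz P
  have hQ_iff {b : B} {p : MvPolynomial ι R} (hb : MvPolynomial.aeval z p = b) : b ∈ Q ↔ p ∈ P := by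
    obtain rfl : (⟨_, hB p⟩ : B) = b := Subtype.ext hb
    rw [← hcomap]
    rfl
  have hQR (r : R) : algebraMap R B r ∈ Q ↔ r ∈ q :=
    (hQ_iff (p := .C r) (MvPolynomial.aeval_C _ r)).trans <| by
      simp [P, RingHom.mem_ker, Ideal.Quotient.eq_zero_iff_mem]
  have hzB (i : ι) : z i ∈ B := MvPolynomial.aeval_X (R := R) z i ▸ hB (.X i)
  refine ⟨B, Q, hQ, Ideal.ext hQR, ⟨fun i ↦ ⟨z i, hzB i⟩, fun i ↦ rfl, fun p hp d ↦ ?_⟩, hroot⟩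
  exact (hQR _).mpr (mem_ker_map_mk_iff.mp
    ((hQ_iff (val_aeval (z := z) (fun i ↦ rfl) p).symm).mp hp) d)

include h

theorem IsShift.mem_of_isGenericAlong {B : Subalgebra R S} {Q : Ideal B}
    (hB : ∀ (f : B[X]) (x : S), aeval x f = 0 → f.leadingCoeff ∉ Q → x ∈ B) {j : ℕ} {Z : Fin n → B}
    (hZ : ∀ i, (Z i : S) = y (i + j)) (hZQ : IsGenericAlong R Z Q) {f : (MvPolynomial (Fin n) R)[X]}
    (hf : evalOver (window y n 0) (y n) f = 0) {d : Fin n →₀ ℕ}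
    (hd : algebraMap R B ((σ ^ j) (f.leadingCoeff.coeff d)) ∉ Q) : y (n + j) ∈ B := by
  let χ : MvPolynomial (Fin n) R →+* B :=
    (MvPolynomial.aeval Z : MvPolynomial (Fin n) R →ₐ[R] B).toRingHom.comp
      (MvPolynomial.map (σ ^ j))
  have hlc : χ f.leadingCoeff ∉ Q := fun hmem ↦
    hd (MvPolynomial.coeff_map (σ ^ j) f.leadingCoeff d ▸ hZQ _ hmem d)
  refine hB (f.map χ) _ ?_ ?_
  · have hχ : (algebraMap B S).comp χ =
        (MvPolynomial.aeval (window y n (0 + j)) : MvPolynomial (Fin n) R →ₐ[R] S).toRingHom.comp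
          (MvPolynomial.map (σ ^ j)) :=
      RingHom.ext fun p ↦ val_aeval (fun i ↦ by rw [hZ, zero_add]) _
    have hroot := h.pow_evalOver_window j 0 (y n) f
    rw [hf, map_zero, h.pow_gen] at hroot
    rw [aeval_def, eval₂_map, hχ, ← eval₂_map]
    exact hroot.symm
  · rwa [leadingCoeff_map_of_leadingCoeff_ne_zero _ fun h0 ↦ hlc (h0 ▸ Q.zero_mem)]

theorem IsShift.exists_isGenericAlong_succ {B : Subalgebra R S} {Q : Ideal B} [Q.IsPrime] {j : ℕ}
    {Z : Fin n → B} (hZ : ∀ i, (Z i : S) = y (i + j)) (hZQ : IsGenericAlong R Z Q)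
    (hyB : y (n + j) ∈ B) {W : (MvPolynomial (Fin n) R)[X]}
    (hW : evalOver (window y n 1) (y 0) W = 0) {g : (MvPolynomial (Fin n) R)[X]}
    (hg : evalOver (window y n 0) (MvPolynomial.aeval (window y n 1) W.leadingCoeff) g = 0)
    {e : Fin n →₀ ℕ} (he : algebraMap R B ((σ ^ j) ((g.coeff 0).coeff e)) ∉ Q) :
    ∃ Z' : Fin n → B, (∀ i, (Z' i : S) = y (i + (j + 1))) ∧ IsGenericAlong R Z' Q := by
  let Z' : Fin (n + 1) → B := Fin.snoc Z ⟨y (n + j), hyB⟩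
  have hZ' (i : Fin (n + 1)) : (Z' i : S) = y (i + j) := by
    induction i using Fin.lastCases with
    | last => simp [Z']
    | cast i => simpa [Z'] using hZ i
  have htail (i : Fin n) : (Fin.tail Z' i : S) = y (i + (1 + j)) := by
    rw [← add_assoc]
    exact hZ' i.succ
  refine ⟨Fin.tail Z', fun i ↦ by rw [htail, add_comm 1], ?_⟩
  refine IsGenericAlong.tail_of_init (f := W.map (MvPolynomial.map (σ ^ j))) (k := W.natDegree)
    (by rwa [Fin.init_snoc]) (Subtype.ext ?_) ?_
  · rw [val_evalOver htail, hZ', Fin.val_zero, ← h.pow_gen, ← h.pow_evalOver_window, hW, map_zero]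
    rfl
  · refine notMem_of_evalOver_eq_zero hZQ (g := g.map (MvPolynomial.map (σ ^ j))) (d := e)
      (Subtype.ext ?_) ?_
    · have hZ0 (i : Fin n) : (Z i : S) = y (i + (0 + j)) := by rw [hZ, zero_add]
      rw [val_evalOver hZ0, val_aeval htail, coeff_map, coeff_natDegree, ← h.pow_aeval_window,
        ← h.pow_evalOver_window, hg, map_zero]
      rfl
    · rwa [coeff_map, MvPolynomial.coeff_map]

theorem IsShift.exists_prime_isGenericAlong [IsDomain S]
    (hgen : Algebra.adjoin R (Set.range y) = ⊤) (hind : AlgebraicIndependent R (window y n 0))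
    {f : (MvPolynomial (Fin n) R)[X]} (hf : evalOver (window y n 0) (y n) f = 0)
    {W : (MvPolynomial (Fin n) R)[X]} (hW : evalOver (window y n 1) (y 0) W = 0)
    {g : (MvPolynomial (Fin n) R)[X]}
    (hg : evalOver (window y n 0) (MvPolynomial.aeval (window y n 1) W.leadingCoeff) g = 0)
    {d e : Fin n →₀ ℕ} {q : Ideal R} [q.IsPrime]
    (hd : ∀ j, (σ ^ j) (f.leadingCoeff.coeff d) ∉ q)
    (he : ∀ j, (σ ^ j) ((g.coeff 0).coeff e) ∉ q) :
    ∃ Q : Ideal S, Q.IsPrime ∧ Q.under R = q ∧ ∀ j, IsGenericAlong R (window y n j) Q := by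
  obtain ⟨B, Q, hQ, rfl, hbase, hroot⟩ := exists_subalgebra_isGenericAlong hind q
  have hZ (j : ℕ) : ∃ Z : Fin n → B, (∀ i, (Z i : S) = y (i + j)) ∧ IsGenericAlong R Z Q := by
    induction j with
    | zero => exact hbase
    | succ j ih =>
      obtain ⟨Z, hZ, hZQ⟩ := ih
      have hyB := h.mem_of_isGenericAlong hroot hZ hZQ hf (hd j)
      exact h.exists_isGenericAlong_succ hZ hZQ hyB hW hg (he j)
  have hyB (k : ℕ) : y k ∈ B := by
    rcases lt_or_ge k n with hk | hk
    · obtain ⟨Z, hZ, -⟩ := hbase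
      have hZk : (Z ⟨k, hk⟩ : S) = y k := hZ ⟨k, hk⟩
      exact hZk ▸ (Z ⟨k, hk⟩).2
    · obtain ⟨j, rfl⟩ := Nat.exists_eq_add_of_le hk
      obtain ⟨Z, hZ, hZQ⟩ := hZ j
      exact h.mem_of_isGenericAlong hroot hZ hZQ hf (hd j)
  have hBtop (x : S) : x ∈ B :=
    (hgen.ge.trans (Algebra.adjoin_le (Set.range_subset_iff.mpr hyB))) trivial
  let E : S →ₐ[R] B := (AlgHom.id R S).codRestrict B hBtop
  refine ⟨Q.comap E, inferInstance, rfl, fun j p hp d ↦ ?_⟩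
  obtain ⟨Z, hZ, hZQ⟩ := hZ j
  refine hZQ p ?_ d
  rwa [show MvPolynomial.aeval Z p = E _ from Subtype.ext (val_aeval hZ p)]

end GenericPrime

section Algebraicity

variable {K E : Type*} [CommRing K] [IsDomain K] [CommRing E] [IsDomain E] [Algebra K E]

theorem isAlgebraic_of_eval₂_eq_zero {A : Type*} [CommRing A] {ψ : A →+* E}
    (hψ : ∀ a, IsAlgebraic K (ψ a)) {f : A[X]} (hf : ψ f.leadingCoeff ≠ 0) {x : E}
    (hx : f.eval₂ ψ x = 0) : IsAlgebraic K x := by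
  let ψ' : A →+* Subalgebra.algebraicClosure K E := ψ.codRestrict _ hψ
  have h : IsAlgebraic (Subalgebra.algebraicClosure K E) x := by
    refine ⟨f.map ψ', fun h ↦ hf ?_, by rwa [aeval_def, eval₂_map]⟩
    exact congrArg Subtype.val ((coeff_map ψ' f.natDegree).symm.trans (by rw [h, coeff_zero]))
  exact h.restrictScalars K

variable {R S : Type*} [CommRing R] [CommRing S] [Algebra R S] {θ : S →+* E}

omit [IsDomain E] in
theorem isAlgebraic_map_of_mem_adjoin (hR : ∀ r, IsAlgebraic K (θ (algebraMap R S r))) {s : Set S}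
    (hs : ∀ x ∈ s, IsAlgebraic K (θ x)) {x : S} (hx : x ∈ Algebra.adjoin R s) :
    IsAlgebraic K (θ x) := by
  induction hx using Algebra.adjoin_induction with
  | mem x hx => exact hs x hx
  | algebraMap r => exact hR r
  | add x y _ _ hx hy => exact map_add θ x y ▸ hx.add hy
  | mul x y _ _ hx hy => exact map_mul θ x y ▸ hx.mul hy

theorem IsShift.isAlgebraic_map {σ : R →+* R} {τ : S →+* S} {y : ℕ → S} (h : IsShift σ τ y)
    (hgen : Algebra.adjoin R (Set.range y) = ⊤) {n : ℕ} {f : (MvPolynomial (Fin n) R)[X]}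
    (hf : evalOver (window y n 0) (y n) f = 0)
    (hlc : ∀ j, θ ((τ ^ j) (MvPolynomial.aeval (window y n 0) f.leadingCoeff)) ≠ 0)
    (hR : ∀ r, IsAlgebraic K (θ (algebraMap R S r))) (hn : ∀ i < n, IsAlgebraic K (θ (y i)))
    (x : S) : IsAlgebraic K (θ x) := by
  have hy (k : ℕ) : IsAlgebraic K (θ (y k)) := by
    induction k using Nat.strong_induction_on with
    | _ k ih =>
      rcases lt_or_ge k n with hk | hk
      · exact hn k hk
      obtain ⟨j, rfl⟩ := Nat.exists_eq_add_of_le hk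
      let φ : MvPolynomial (Fin n) R →+* S := MvPolynomial.aeval (R := R) (window y n 0)
      let ψ : MvPolynomial (Fin n) R →+* E := (θ.comp (τ ^ j)).comp φ
      refine isAlgebraic_of_eval₂_eq_zero (ψ := ψ) (fun p ↦ ?_) (hlc j) (f := f) ?_
      · have hp := h.pow_aeval_window j 0 p
        refine (congrArg θ hp).symm ▸ isAlgebraic_map_of_mem_adjoin hR ?_
          ((Algebra.adjoin_range_eq_range_aeval R (window y n (0 + j))).ge ⟨_, rfl⟩)
        rintro _ ⟨i, rfl⟩
        exact ih _ (by omega)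
      · have hroot := (hom_eval₂ f φ (θ.comp (τ ^ j)) (y n)).symm.trans (congrArg _ hf)
        rwa [map_zero, RingHom.comp_apply, h.pow_gen] at hroot
  exact isAlgebraic_map_of_mem_adjoin hR (Set.forall_mem_range.mpr hy) (hgen.ge trivial)

end Algebraicity

section AlgebraicExtension

theorem exists_injective_ringHom_comp_eq {A E M : Type*} [CommRing A] [CommRing E] [IsDomain E]
    [Algebra A E] [FaithfulSMul A E] [Algebra.IsAlgebraic A E] [Field M] [IsAlgClosed M]
    {f : A →+* M} (hf : Function.Injective f) :
    ∃ g : E →+* M, Function.Injective g ∧ g.comp (algebraMap A E) = f := by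
  have : IsDomain A := hf.isDomain f
  let := f.toAlgebra
  have : FaithfulSMul A M := (faithfulSMul_iff_algebraMap_injective A M).mpr hf
  let g : E →ₐ[A] M := IsAlgClosed.lift
  refine ⟨g, (RingHom.injective_iff_ker_eq_bot _).mpr ?_, g.comp_algebraMap⟩
  by_contra h
  obtain ⟨e, he, he0⟩ := Submodule.exists_mem_ne_zero_of_ne_bot h
  refine Ideal.comap_ne_bot_of_algebraic_mem he0 he (Algebra.IsAlgebraic.isAlgebraic (R := A) e) ?_
  rw [RingHom.comap_ker]
  exact (RingHom.injective_iff_ker_eq_bot _).mp (g.comp_algebraMap.symm ▸ hf)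

variable {A B : Type*} [CommRing A] [CommRing B] [Algebra A B] {P : Ideal A} {Q : Ideal B}
  [Q.IsPrime] [Q.LiesOver P] [Algebra.IsAlgebraic (A ⧸ P) (B ⧸ Q)]

theorem exists_ringHom_ker_eq {M : Type*} [Field M] [IsAlgClosed M] {f : A →+* M}
    (hf : RingHom.ker f = P) :
    ∃ ψ : B →+* M, RingHom.ker ψ = Q ∧ ∀ a, ψ (algebraMap A B a) = f a := by
  subst hf
  obtain ⟨g, hg, hgf⟩ := exists_injective_ringHom_comp_eq (E := B ⧸ Q) f.kerLift_injective
  refine ⟨g.comp (Ideal.Quotient.mk Q), ?_, fun a ↦ ?_⟩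
  · rw [RingHom.ker_comp_of_injective _ hg, Ideal.mk_ker]
  · exact congrArg (· (Ideal.Quotient.mk _ a)) hgf

theorem exists_isAlgClosed_ringHom_comp_eq {A : Type u} {B : Type*} [CommRing A] [CommRing B]
    [Algebra A B] {P : Ideal A} {Q : Ideal B} [Q.IsPrime] [Q.LiesOver P]
    [Algebra.IsAlgebraic (A ⧸ P) (B ⧸ Q)] {τ : A →+* B} (hτ : Q.comap τ = P) :
    ∃ (M : Type u) (_ : Field M) (_ : IsAlgClosed M) (φ : B →+* M) (τ' : M →+* M),
      RingHom.ker φ = Q ∧ ∀ a, τ' (φ (algebraMap A B a)) = φ (τ a) := by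
  have : P.IsPrime := Q.over_def P ▸ inferInstance
  let M := AlgebraicClosure (FractionRing (A ⧸ P))
  have hinj : Function.Injective (algebraMap (A ⧸ P) M) :=
    (algebraMap (FractionRing (A ⧸ P)) M).injective.comp (IsFractionRing.injective _ _)
  have : FaithfulSMul (A ⧸ P) M := (faithfulSMul_iff_algebraMap_injective _ _).mpr hinj
  have : Algebra.IsAlgebraic (A ⧸ P) (FractionRing (A ⧸ P)) :=
    IsLocalization.isAlgebraic _ (nonZeroDivisors (A ⧸ P))
  have : Algebra.IsAlgebraic (A ⧸ P) M := .trans _ (FractionRing (A ⧸ P)) _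
  obtain ⟨φ, hφ, hφA⟩ := exists_ringHom_ker_eq (Q := Q)
    (f := (algebraMap (A ⧸ P) M).comp (Ideal.Quotient.mk P))
    (by rw [RingHom.ker_comp_of_injective _ hinj, Ideal.mk_ker])
  have hker : RingHom.ker (φ.comp τ) = P := by rw [← RingHom.comap_ker, hφ, hτ]
  obtain ⟨τ', -, hτ'⟩ := exists_injective_ringHom_comp_eq (E := M)
    (RingHom.lift_injective_of_ker_le_ideal P (fun a ha ↦ hker.ge ha) hker.le)
  refine ⟨M, inferInstance, inferInstance, φ, τ', hφ, fun a ↦ ?_⟩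
  rw [hφA]
  exact congrArg (· (Ideal.Quotient.mk P a)) hτ'

end AlgebraicExtension

section Pigeonhole

theorem eq_of_mem_adjoin {R S M : Type*} [CommRing R] [CommRing S] [Algebra R S] [CommRing M]
    {f g : S →+* M} (hR : ∀ r, f (algebraMap R S r) = g (algebraMap R S r)) {s : Set S}
    (hs : ∀ x ∈ s, f x = g x) {x : S} (hx : x ∈ Algebra.adjoin R s) : f x = g x := by
  induction hx using Algebra.adjoin_induction with
  | mem x hx => exact hs x hx
  | algebraMap r => exact hR r
  | add x y _ _ hx hy => rw [map_add, map_add, hx, hy]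
  | mul x y _ _ hx hy => rw [map_mul, map_mul, hx, hy]

variable {A B ι : Type*} [CommRing A] [CommRing B] [Algebra A B]

theorem isAlgebraic_quotient_of_adjoin_eq_top {s : Set B} (hs : Algebra.adjoin A s = ⊤) {g : A[X]}
    (hg : ∀ x ∈ s, aeval x g = 0) {P : Ideal A} [P.IsPrime] (hP : g.leadingCoeff ∉ P) (Q : Ideal B)
    [Q.LiesOver P] : Algebra.IsAlgebraic (A ⧸ P) (B ⧸ Q) where
  isAlgebraic b := by
    obtain ⟨b, rfl⟩ := Ideal.Quotient.mk_surjective b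
    have hA (a : A) : IsAlgebraic (A ⧸ P) (Ideal.Quotient.mk Q (algebraMap A B a)) := by
      rw [← Ideal.Quotient.algebraMap_mk_of_liesOver Q P]
      exact isAlgebraic_algebraMap _
    refine isAlgebraic_map_of_mem_adjoin (R := A) hA (fun x hx ↦ ?_) (hs.ge trivial)
    refine ⟨g.map (Ideal.Quotient.mk P), fun h ↦ hP ?_, ?_⟩
    · rw [← Ideal.Quotient.eq_zero_iff_mem, leadingCoeff, ← coeff_map, h, coeff_zero]
    · have hcomp : (algebraMap (A ⧸ P) (B ⧸ Q)).comp (Ideal.Quotient.mk P) =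
          (Ideal.Quotient.mk Q).comp (algebraMap A B) :=
        RingHom.ext (Ideal.Quotient.algebraMap_mk_of_liesOver Q P)
      rw [aeval_def, eval₂_map, hcomp, ← hom_eval₂, ← aeval_def, hg x hx, map_zero]

theorem exists_ne_eq_of_pow_natDegree_lt_card [Fintype ι] {x : ι → B}
    (hx : Algebra.adjoin A (Set.range x) = ⊤) {g : A[X]} (hg : ∀ i, aeval (x i) g = 0) {P : Ideal A}
    (hP : g.leadingCoeff ∉ P) {κ : Type*} [Fintype κ]
    (hκ : g.natDegree ^ Fintype.card ι < Fintype.card κ) {Q : κ → Ideal B}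
    (hQ : ∀ k, (Q k).IsPrime) (hQP : ∀ k, (Q k).under A = P) : ∃ i j, i ≠ j ∧ Q i = Q j := by
  classical
  obtain ⟨k₀⟩ : Nonempty κ := Fintype.card_pos_iff.mp (by omega)
  have : P.IsPrime := hQP k₀ ▸ inferInstance
  let M := AlgebraicClosure P.ResidueField
  let f : A →+* M := (algebraMap P.ResidueField M).comp (algebraMap A P.ResidueField)
  have hf : RingHom.ker f = P := by
    rw [RingHom.ker_comp_of_injective _ (algebraMap P.ResidueField M).injective,
      Ideal.ker_algebraMap_residueField]
  have hψ (k : κ) : ∃ ψ : B →+* M, RingHom.ker ψ = Q k ∧ ∀ a, ψ (algebraMap A B a) = f a := by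
    have : (Q k).LiesOver P := ⟨(hQP k).symm⟩
    have := isAlgebraic_quotient_of_adjoin_eq_top hx (Set.forall_mem_range.mpr hg) hP (Q k)
    exact exists_ringHom_ker_eq hf
  choose ψ hker hψf using hψ
  have hgf : g.map f ≠ 0 := fun h ↦ hP <| by
    rw [← hf, RingHom.mem_ker, leadingCoeff, ← coeff_map, h, coeff_zero]
  have hroot (k : κ) (i : ι) : ψ k (x i) ∈ (g.map f).roots.toFinset := by
    rw [Multiset.mem_toFinset, mem_roots hgf, IsRoot, eval_map,
      show f = (ψ k).comp (algebraMap A B) from RingHom.ext fun a ↦ (hψf k a).symm, ← hom_eval₂,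
      ← aeval_def, hg, map_zero]
  obtain ⟨i, j, hij, h⟩ := Fintype.exists_ne_map_eq_of_card_lt
    (fun k (i : ι) ↦ (⟨ψ k (x i), hroot k i⟩ : (g.map f).roots.toFinset)) <| by
      rw [Fintype.card_fun, Fintype.card_coe]
      refine lt_of_le_of_lt (Nat.pow_le_pow_left ?_ _) hκ
      exact (Multiset.toFinset_card_le _).trans ((card_roots' _).trans natDegree_map_le)
  refine ⟨i, j, hij, ?_⟩
  have hψ_eq (b : B) : ψ i b = ψ j b := by
    refine eq_of_mem_adjoin (fun a ↦ by rw [hψf, hψf]) ?_ (hx.ge (Algebra.mem_top (x := b)))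
    rintro _ ⟨l, rfl⟩
    exact congrArg Subtype.val (congrFun h l)
  rw [← hker, RingHom.ext hψ_eq, hker]

theorem adjoin_range_mk_eq_top (x : ι → B) : Algebra.adjoin A (Set.range fun i ↦
    (⟨x i, Algebra.subset_adjoin ⟨i, rfl⟩⟩ : Algebra.adjoin A (Set.range x))) = ⊤ := by
  rw [← Algebra.adjoin_adjoin_coe_preimage]
  congr 1
  ext
  simp [Subtype.ext_iff]

theorem exists_ne_forall_mem_adjoin_iff [Fintype ι] {x : ι → B} {g : A[X]}
    (hg : ∀ i, aeval (x i) g = 0) {P : Ideal A} (hP : g.leadingCoeff ∉ P) {κ : Type*} [Fintype κ]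
    (hκ : g.natDegree ^ Fintype.card ι < Fintype.card κ) {Q : κ → Ideal B}
    (hQ : ∀ k, (Q k).IsPrime) (hQP : ∀ k, (Q k).under A = P) :
    ∃ i j, i ≠ j ∧ ∀ b ∈ Algebra.adjoin A (Set.range x), b ∈ Q i ↔ b ∈ Q j := by
  let C := Algebra.adjoin A (Set.range x)
  let x' (i : ι) : C := ⟨x i, Algebra.subset_adjoin ⟨i, rfl⟩⟩
  obtain ⟨i, j, hij, h⟩ := exists_ne_eq_of_pow_natDegree_lt_card (adjoin_range_mk_eq_top x) (g := g)
    (fun i ↦ Subtype.ext ((aeval_algHom_apply C.val (x' i) g).symm.trans (hg i))) hP hκ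
    (Q := fun k ↦ (Q k).comap C.val) (fun k ↦ inferInstance) hQP
  exact ⟨i, j, hij, fun b hb ↦ (congrArg ((⟨b, hb⟩ : C) ∈ ·) h).to_iff⟩

theorem exists_forall_aeval_eq_zero [IsDomain A] [Finite ι] {x : ι → B}
    (hx : ∀ i, IsAlgebraic A (x i)) : ∃ g : A[X], g ≠ 0 ∧ ∀ i, aeval (x i) g = 0 := by
  have := Fintype.ofFinite ι
  choose g hg hgx using hx
  refine ⟨∏ i, g i, Finset.prod_ne_zero_iff.mpr fun i _ ↦ hg i, fun i ↦ ?_⟩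
  rw [map_prod]
  exact Finset.prod_eq_zero (Finset.mem_univ i) (hgx i)

end Pigeonhole

section PeriodicContraction

theorem comap_pow_mul_eq {R : Type*} [CommRing R] {σ : R →+* R} {q : Ideal R} {d : ℕ}
    (h : q.comap (σ ^ d) = q) (c : ℕ) : q.comap (σ ^ (d * c)) = q := by
  induction c with
  | zero => exact Ideal.comap_id q
  | succ c ih =>
    rw [mul_add_one, pow_add, RingHom.mul_def, ← Ideal.comap_comap, ih, h]

variable {R S : Type*} [CommRing R] [CommRing S] [Algebra R S] {σ : R →+* R} {τ : S →+* S}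
  {y : ℕ → S} {n : ℕ} (h : IsShift σ τ y)
include h

theorem IsShift.under_comap_pow {Q : Ideal S} (hQ : ∀ j, IsGenericAlong R (window y n j) Q) {k : ℕ}
    (hk : (Q.under R).comap (σ ^ k) = Q.under R) :
    (Q.comap (τ ^ k)).under (Algebra.adjoin R (Set.range (window y n 0))) = Q.under _ := by
  have hmem (j : ℕ) (p : MvPolynomial (Fin n) R) :
      MvPolynomial.aeval (window y n j) p ∈ Q ↔ ∀ d, algebraMap R S (p.coeff d) ∈ Q :=
    ⟨hQ j p, aeval_mem_of_coeff_mem _⟩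
  ext ⟨a, ha⟩
  obtain ⟨p, rfl⟩ := (Algebra.adjoin_range_eq_range_aeval R _).le ha
  refine Iff.trans (b := (τ ^ k) (MvPolynomial.aeval (window y n 0) p) ∈ Q) .rfl ?_
  refine Iff.trans ?_ (hmem 0 p).symm
  rw [h.pow_aeval_window, hmem]
  refine forall_congr' fun d ↦ ?_
  rw [MvPolynomial.coeff_map]
  exact (congrArg (p.coeff d ∈ ·) hk).to_iff

variable [IsDomain S] (hτ : Function.Injective τ) (hgen : Algebra.adjoin R (Set.range y) = ⊤)
  {f : (MvPolynomial (Fin n) R)[X]} (hf : evalOver (window y n 0) (y n) f = 0)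
  (hlc : MvPolynomial.aeval (window y n 0) f.leadingCoeff ≠ 0)
include hτ hgen hf hlc

theorem IsShift.isAlgebraic_adjoin_window (x : S) :
    IsAlgebraic (Algebra.adjoin R (Set.range (window y n 0))) x := by
  let A := Algebra.adjoin R (Set.range (window y n 0))
  exact h.isAlgebraic_map (K := A) (θ := RingHom.id S) hgen hf
    (fun j ↦ (map_ne_zero_iff (τ ^ j) (by simpa using hτ.iterate j)).mpr hlc)
    (fun r ↦ isAlgebraic_algebraMap (algebraMap R A r))
    (fun i hi ↦ isAlgebraic_algebraMap (⟨y i, Algebra.subset_adjoin ⟨⟨i, hi⟩, rfl⟩⟩ : A)) x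

theorem IsShift.exists_bound_periodic (m : ℕ) :
    ∃ p : S, p ≠ 0 ∧ ∃ N : ℕ, ∀ Q : Ideal S, Q.IsPrime → p ∉ Q →
      (∀ j, IsGenericAlong R (window y n j) Q) →
      ∀ d, (Q.under R).comap (σ ^ d) = Q.under R → ∃ i D, 1 ≤ D ∧ D ≤ N ∧
        ∀ x ∈ Algebra.adjoin R (Set.range (window y m 0)),
          (τ ^ (d * D)) x ∈ Q.comap (τ ^ (d * i)) ↔ x ∈ Q.comap (τ ^ (d * i)) := by
  let A := Algebra.adjoin R (Set.range (window y n 0))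
  obtain ⟨g, hg0, hg⟩ := exists_forall_aeval_eq_zero (A := A) (x := window y m 0) fun i ↦
    h.isAlgebraic_adjoin_window hτ hgen hf hlc _
  refine ⟨g.leadingCoeff, fun h0 ↦ hg0 (leadingCoeff_eq_zero.mp (Subtype.ext h0)),
    g.natDegree ^ m, fun Q hQ hp hgeneric d hd ↦ ?_⟩
  obtain ⟨i, j, hij, hmem⟩ := exists_ne_forall_mem_adjoin_iff (κ := Fin (g.natDegree ^ m + 1))
    hg (P := Q.under A) hp (by simp) (Q := fun i ↦ Q.comap (τ ^ (d * i))) (fun i ↦ inferInstance)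
    fun i ↦ h.under_comap_pow hgeneric (comap_pow_mul_eq hd i)
  wlog hlt : i < j generalizing i j
  · exact this j i hij.symm (fun b hb ↦ (hmem b hb).symm) (hij.symm.lt_of_le (not_lt.mp hlt))
  refine ⟨i, j - i, by omega, by omega, fun x hx ↦ (Iff.trans ?_ (hmem x ?_).symm)⟩
  · rw [Ideal.mem_comap, ← RingHom.comp_apply, ← RingHom.mul_def, ← pow_add, ← mul_add,
      Nat.add_sub_cancel' hlt.le, Ideal.mem_comap]
  · have hle : Algebra.adjoin R (Set.range (window y m 0)) ≤
        (Algebra.adjoin A (Set.range (window y m 0))).restrictScalars R :=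
      Algebra.adjoin_le fun z hz ↦
        (Subalgebra.mem_restrictScalars R).mpr (Algebra.subset_adjoin hz)
    exact hle hx

theorem IsShift.exists_prime_isGenericAlong_notMem (hind : AlgebraicIndependent R (window y n 0))
    (h0 : IsAlgebraic (Algebra.adjoin R (Set.range (window y n 1))) (y 0)) {x : S} (hx : x ≠ 0) :
    ∃ r : R, r ≠ 0 ∧ ∀ q : Ideal R, q.IsPrime → (∀ j, (σ ^ j) r ∉ q) →
      ∃ Q : Ideal S, Q.IsPrime ∧ Q.under R = q ∧ (∀ j, IsGenericAlong R (window y n j) Q) ∧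
        ∀ j, (τ ^ j) x ∉ Q := by
  have := hind.algebraMap_injective.isDomain
  have halg := h.isAlgebraic_adjoin_window hτ hgen hf hlc
  have hcoeff {p : MvPolynomial (Fin n) R} (hp : MvPolynomial.aeval (window y n 0) p ≠ 0) :
      ∃ d, p.coeff d ≠ 0 :=
    MvPolynomial.ne_zero_iff.mp fun h ↦ hp (h ▸ map_zero _)
  obtain ⟨W, hW, hWlc⟩ := exists_evalOver_eq_zero_leadingCoeff h0
  obtain ⟨g, hg, hg0⟩ := exists_evalOver_eq_zero_coeff_zero (halg _) hWlc
  obtain ⟨gx, hgx, hgx0⟩ := exists_evalOver_eq_zero_coeff_zero (halg x) hx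
  obtain ⟨a, ha⟩ := hcoeff hlc
  obtain ⟨b, hb⟩ := hcoeff hg0
  obtain ⟨c, hc⟩ := hcoeff hgx0
  refine ⟨_, mul_ne_zero (mul_ne_zero ha hb) hc, fun q hq hr ↦ ?_⟩
  simp only [map_mul, hq.mul_mem_iff_mem_or_mem, not_or] at hr
  obtain ⟨Q, hQ, hQq, hgeneric⟩ := h.exists_prime_isGenericAlong hgen hind hf hW hg
    (fun j ↦ (hr j).1.1) (fun j ↦ (hr j).1.2)
  refine ⟨Q, hQ, hQq, hgeneric, fun j ↦ ?_⟩
  refine notMem_of_evalOver_eq_zero (hgeneric j) (g := gx.map (MvPolynomial.map (σ ^ j)))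
    (d := c) ?_ ?_
  · have hroot := h.pow_evalOver_window j 0 x gx
    rwa [hgx, map_zero, zero_add, eq_comm] at hroot
  · rw [coeff_map, MvPolynomial.coeff_map]
    exact fun hmem ↦ (hr j).2 (hQq.le hmem)

end PeriodicContraction

section StableRelation

theorem eval₂_eq_zero_of_forall_natDegree_le {A B L : Type*} [CommRing A] [CommRing B] [CommRing L]
    [IsDomain L] {φ : A →+* B} {ψ : A →+* L} (hker : RingHom.ker φ ≤ RingHom.ker ψ) {b : B} {α : L}
    {G : A[X]} (hG : G.eval₂ φ b = 0) (hGα : G.eval₂ ψ α = 0) (hlc : ψ G.leadingCoeff ≠ 0)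
    (hmin : ∀ f : A[X], f.eval₂ φ b = 0 → φ f.leadingCoeff ≠ 0 → G.natDegree ≤ f.natDegree)
    {f : A[X]} (hf : f.eval₂ φ b = 0) : f.eval₂ ψ α = 0 := by
  induction hd : f.natDegree using Nat.strong_induction_on generalizing f with
  | _ d ih =>
    rcases Nat.eq_zero_or_pos f.natDegree with h0 | hpos
    · rw [eq_C_of_natDegree_eq_zero h0, eval₂_C] at hf ⊢
      exact hker hf
    by_cases hlcf : φ f.leadingCoeff = 0
    · rw [← eraseLead_add_C_mul_X_pow f, eval₂_add, eval₂_mul, eval₂_C] at hf ⊢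
      rw [hlcf, zero_mul, add_zero] at hf
      have hlt := (eraseLead_natDegree_le f).trans_lt (Nat.sub_one_lt_of_lt hpos)
      rw [ih _ (hd ▸ hlt) hf rfl, show ψ _ = 0 from hker hlcf, zero_mul, add_zero]
    · have hle := hmin f hf hlcf
      have h := ih _ (hd ▸ natDegree_cancelLeads_lt_of_natDegree_le_natDegree hle hpos)
        (by simp [cancelLeads, eval₂_mul, hf, hG]) rfl
      simpa [cancelLeads, eval₂_mul, hGα, Nat.sub_eq_zero_of_le hle, hlc] using h

variable {R S : Type*} [CommRing R] [CommRing S] [Algebra R S]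

/-- The polynomial `G`, with coefficients in the first `m` terms of the sequence `y`, is a relation
for `y m` which does not degenerate. -/
structure IsRelation (y : ℕ → S) (m : ℕ) (G : (MvPolynomial (Fin m) R)[X]) : Prop where
  leadingCoeff_ne_zero : MvPolynomial.aeval (window y m 0) G.leadingCoeff ≠ 0
  evalOver_eq_zero : evalOver (window y m 0) (y m) G = 0

/-- The relation `G` for `y m` has the least degree among the relations for `y m, y (m + 1), …`, so
that its translates remain minimal. -/
structure IsMinimalRelation (y : ℕ → S) (m : ℕ) (G : (MvPolynomial (Fin m) R)[X]) : Prop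
    extends IsRelation y m G where
  natDegree_le : ∀ j, ∀ F : (MvPolynomial (Fin (m + j)) R)[X], IsRelation y (m + j) F →
    G.natDegree ≤ F.natDegree

/-- The `j`-th translate of a polynomial in `m` variables, in which `σ ^ j` has been applied to the
coefficients and the variables are the last `m` out of `m + j`. -/
noncomputable def shiftVars (σ : R →+* R) (m j : ℕ) :
    MvPolynomial (Fin m) R →+* MvPolynomial (Fin (m + j)) R :=
  (MvPolynomial.rename (Fin.addNat · j)).toRingHom.comp (MvPolynomial.map (σ ^ j))

theorem aeval_window_shiftVars (σ : R →+* R) (y : ℕ → S) {m j : ℕ} (p : MvPolynomial (Fin m) R) :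
    MvPolynomial.aeval (window y (m + j) 0) (shiftVars σ m j p) =
      MvPolynomial.aeval (window y m j) (MvPolynomial.map (σ ^ j) p) :=
  MvPolynomial.aeval_rename _ _ _

theorem evalOver_window_map_shiftVars (σ : R →+* R) (y : ℕ → S) (x : S) {m j : ℕ}
    (G : (MvPolynomial (Fin m) R)[X]) :
    evalOver (window y (m + j) 0) x (G.map (shiftVars σ m j)) =
      evalOver (window y m j) x (G.map (MvPolynomial.map (σ ^ j))) := by
  refine (eval₂_map _ _ _).trans (Eq.trans ?_ (eval₂_map _ _ _).symm)
  congr 1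
  exact RingHom.ext (aeval_window_shiftVars σ y)

theorem IsShift.isRelation_map_shiftVars {σ : R →+* R} {τ : S →+* S} {y : ℕ → S}
    (h : IsShift σ τ y) (hτ : Function.Injective τ) {m : ℕ} {G : (MvPolynomial (Fin m) R)[X]}
    (hG : IsRelation y m G) (j : ℕ) : IsRelation y (m + j) (G.map (shiftVars σ m j)) := by
  have hlc : MvPolynomial.aeval (window y (m + j) 0) (shiftVars σ m j G.leadingCoeff) ≠ 0 := by
    have hτj : Function.Injective (τ ^ j) := by simpa using hτ.iterate j
    have := h.pow_aeval_window j 0 G.leadingCoeff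
    rw [zero_add] at this
    rw [aeval_window_shiftVars, ← this]
    exact (map_ne_zero_iff (τ ^ j) hτj).mpr hG.leadingCoeff_ne_zero
  constructor
  · rwa [leadingCoeff_map_of_leadingCoeff_ne_zero (shiftVars σ m j)
      fun h0 ↦ hlc (h0 ▸ map_zero (MvPolynomial.aeval (window y (m + j) 0)))]
  · have := h.pow_evalOver_window j 0 (y m) G
    rw [hG.evalOver_eq_zero, map_zero, h.pow_gen, zero_add] at this
    rw [evalOver_window_map_shiftVars, ← this]

theorem IsShift.exists_isMinimalRelation {σ : R →+* R} {τ : S →+* S} {y : ℕ → S}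
    (h : IsShift σ τ y) (hτ : Function.Injective τ) {n : ℕ} {f : (MvPolynomial (Fin n) R)[X]}
    (hf : IsRelation y n f) (k : ℕ) :
    ∃ m ≥ k, ∃ G : (MvPolynomial (Fin m) R)[X], IsMinimalRelation y m G := by
  classical
  have hex : ∃ d, ∃ m ≥ k, ∃ G : (MvPolynomial (Fin m) R)[X], IsRelation y m G ∧ G.natDegree = d :=
    ⟨_, n + k, by omega, _, h.isRelation_map_shiftVars hτ hf k, rfl⟩
  obtain ⟨m, hm, G, hG, hGd⟩ := Nat.find_spec hex
  exact ⟨m, hm, G, hG, fun j F hF ↦ hGd ▸ Nat.find_min' hex ⟨m + j, by omega, F, hF, rfl⟩⟩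

end StableRelation

section Extension

variable {R S L : Type*} [CommRing R] [CommRing S] [Algebra R S] [CommRing L] [Algebra R L]

/-- A polynomial in `k + 1` variables as a polynomial in the last one. -/
noncomputable def splitLast (R : Type*) [CommRing R] (k : ℕ) :
    MvPolynomial (Fin (k + 1)) R →ₐ[R] (MvPolynomial (Fin k) R)[X] :=
  MvPolynomial.aeval (Fin.snoc (fun i ↦ C (MvPolynomial.X i)) X)

theorem evalOver_splitLast (y : ℕ → S) {k : ℕ} (p : MvPolynomial (Fin (k + 1)) R) :
    evalOver (window y k 0) (y k) (splitLast R k p) =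
      MvPolynomial.aeval (window y (k + 1) 0) p := by
  induction p using MvPolynomial.induction_on with
  | C r =>
    rw [← MvPolynomial.algebraMap_eq, AlgHom.commutes, AlgHom.commutes,
      Polynomial.algebraMap_apply, evalOver_C, AlgHom.commutes]
  | add p q hp hq => rw [map_add, map_add, map_add, hp, hq]
  | mul_X p i hp =>
    rw [map_mul, map_mul, map_mul, hp, MvPolynomial.aeval_X, splitLast, MvPolynomial.aeval_X]
    induction i using Fin.lastCases with
    | last => rw [Fin.snoc_last, evalOver_X]; rfl
    | cast i => rw [Fin.snoc_castSucc, evalOver_C, MvPolynomial.aeval_X]; rfl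

theorem exists_rename_val_eq {R : Type*} [CommRing R] (p : MvPolynomial ℕ R) :
    ∃ k, ∃ p' : MvPolynomial (Fin k) R, MvPolynomial.rename Fin.val p' = p := by
  have hvars : (p.vars : Set ℕ) ⊆ Set.range (Fin.val : Fin (p.vars.sup id + 1) → ℕ) := fun i hi ↦
    ⟨⟨i, Nat.lt_succ_of_le (Finset.le_sup (f := id) hi)⟩, rfl⟩
  exact ⟨_, p.exists_rename_eq_of_vars_subset_range _ Fin.val_injective hvars⟩

theorem exists_algHom_of_ker_aeval_le {y : ℕ → S} (hgen : Algebra.adjoin R (Set.range y) = ⊤)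
    {α : ℕ → L} (hker : ∀ k, ∀ p : MvPolynomial (Fin k) R,
      MvPolynomial.aeval (window y k 0) p = 0 → MvPolynomial.aeval (window α k 0) p = 0) :
    ∃ ψ : S →ₐ[R] L, ∀ i, ψ (y i) = α i := by
  have hsurj : Function.Surjective (MvPolynomial.aeval (R := R) y) := by
    rw [← AlgHom.range_eq_top, ← Algebra.adjoin_range_eq_range_aeval, hgen]
  refine ⟨AlgHom.liftOfSurjective _ hsurj (MvPolynomial.aeval (R := R) α) ?_, fun i ↦ ?_⟩
  · intro p hp
    obtain ⟨k, p, rfl⟩ := exists_rename_val_eq p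
    have hp0 := (MvPolynomial.aeval_rename _ _ p).symm.trans hp
    exact (MvPolynomial.aeval_rename _ _ p).trans (hker _ p hp0)
  · rw [← MvPolynomial.aeval_X (R := R) y i, AlgHom.liftOfSurjective_apply, MvPolynomial.aeval_X]

variable {σ : R →+* R} {τ : S →+* S} {y : ℕ → S} (h : IsShift σ τ y)
include h

theorem IsShift.exists_algHom_of_isMinimalRelation [IsDomain L] (hτ : Function.Injective τ)
    (hgen : Algebra.adjoin R (Set.range y) = ⊤) {m : ℕ} {G : (MvPolynomial (Fin m) R)[X]}
    (hG : IsMinimalRelation y m G)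
    {α : ℕ → L} {θ : ℕ → S →+* L} (hθR : ∀ j r, θ j (algebraMap R S r) = algebraMap R L ((σ ^ j) r))
    (hθy : ∀ j, ∀ i ≤ m, θ j (y i) = α (i + j))
    (hθG : ∀ j, θ j (MvPolynomial.aeval (window y m 0) G.leadingCoeff) ≠ 0) :
    ∃ ψ : S →ₐ[R] L, ∀ i, ψ (y i) = α i := by
  have hθ (j k) (hk : k ≤ m + 1) : θ j ∘ window y k 0 = window α k j :=
    funext fun i ↦ hθy j _ (by simp; omega)
  have hθp (j) {k} (hk : k ≤ m + 1) (p : MvPolynomial (Fin k) R) :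
      θ j (MvPolynomial.aeval (window y k 0) p) =
        MvPolynomial.aeval (window α k j) (MvPolynomial.map (σ ^ j) p) := by
    rw [map_aeval_of_semilinear (hθR j), hθ j k hk]
  refine exists_algHom_of_ker_aeval_le hgen fun k ↦ ?_
  have hbase (k) (hk : k ≤ m + 1) (p : MvPolynomial (Fin k) R)
      (hp : MvPolynomial.aeval (window y k 0) p = 0) :
      MvPolynomial.aeval (window α k 0) p = 0 := by
    have := hθp 0 hk p
    rwa [hp, map_zero, pow_zero, RingHom.one_def, MvPolynomial.map_id, eq_comm] at this
  induction k with
  | zero => exact hbase 0 (by omega)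
  | succ k ih =>
    intro p hp
    rcases lt_or_ge k m with hk | hk
    · exact hbase _ (by omega) p hp
    obtain ⟨j, rfl⟩ := Nat.exists_eq_add_of_le hk
    have hGj := h.isRelation_map_shiftVars hτ hG.toIsRelation j
    have hlcα : MvPolynomial.aeval (window α (m + j) 0) (shiftVars σ m j G.leadingCoeff) ≠ 0 := by
      rw [aeval_window_shiftVars, ← hθp j (by omega)]
      exact hθG j
    have hlcG : (G.map (shiftVars σ m j)).leadingCoeff = shiftVars σ m j G.leadingCoeff :=
      leadingCoeff_map_of_leadingCoeff_ne_zero _ fun h0 ↦ hlcα (h0 ▸ map_zero _)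
    rw [← evalOver_splitLast]
    refine eval₂_eq_zero_of_forall_natDegree_le ih hGj.evalOver_eq_zero ?_ ?_ ?_
      ((evalOver_splitLast y p).trans hp)
    · have := map_evalOver_of_semilinear (hθR j) (window y m 0) (y m) G
      rw [hG.evalOver_eq_zero, map_zero, hθ _ _ (by omega), hθy _ _ le_rfl,
        ← evalOver_window_map_shiftVars] at this
      exact this.symm
    · rw [hlcG]
      exact hlcα
    · exact fun F hF hlc ↦ natDegree_map_le.trans (hG.natDegree_le j F ⟨hlc, hF⟩)

end Extension

section PeriodicPrime

/-- The sequence which starts with `u 0, …, u (D - 1)` and is mapped by `τ` to its translate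
by `D`. -/
def periodicSeq {M : Type*} [Semiring M] (τ : M →+* M) (D : ℕ) (u : ℕ → M) (i : ℕ) : M :=
  (τ ^ (i / D)) (u (i % D))

theorem periodicSeq_add_mul {M : Type*} [Semiring M] (τ : M →+* M) {D : ℕ} (hD : 0 < D)
    (u : ℕ → M) (i c : ℕ) : periodicSeq τ D u (i + D * c) = (τ ^ c) (periodicSeq τ D u i) := by
  rw [periodicSeq, periodicSeq, Nat.add_mul_div_left _ _ hD, Nat.add_mul_mod_self_left, add_comm,
    pow_add]
  rfl

theorem periodicSeq_eq {M : Type*} [Semiring M] {τ : M →+* M} {D : ℕ} (hD : 0 < D) {u : ℕ → M}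
    {m : ℕ} (hu : ∀ k ≤ m, τ (u k) = u (k + D)) {k : ℕ} (hk : k ≤ m + D) :
    periodicSeq τ D u k = u k := by
  induction k using Nat.strong_induction_on with
  | _ k ih =>
    rcases lt_or_ge k D with hlt | hge
    · simp [periodicSeq, Nat.div_eq_of_lt hlt, Nat.mod_eq_of_lt hlt]
    · obtain ⟨k, rfl⟩ := Nat.exists_eq_add_of_le' hge
      have := periodicSeq_add_mul τ hD u k 1
      rw [mul_one, pow_one, ih k (by omega) (by omega), hu k (by omega)] at this
      exact this

variable {R S : Type*} [CommRing R] [CommRing S] [Algebra R S] {σ : R →+* R} {τ : S →+* S}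
  {y : ℕ → S} (h : IsShift σ τ y) (hτ : Function.Injective τ)
  (hgen : Algebra.adjoin R (Set.range y) = ⊤) {m : ℕ} {G : (MvPolynomial (Fin m) R)[X]}
  (hG : IsMinimalRelation y m G) {D : ℕ} (hD : 0 < D)
include h hτ hgen hG hD

theorem IsShift.exists_ringHom_comp_pow {M : Type*} [Field M] {φ : S →+* M} {τ' : M →+* M}
    (hφ : ∀ x ∈ Algebra.adjoin R (Set.range (window y (m + 1) 0)), τ' (φ x) = φ ((τ ^ D) x))
    (hlc : ∀ j, φ ((τ ^ j) (MvPolynomial.aeval (window y m 0) G.leadingCoeff)) ≠ 0) :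
    ∃ ψ : S →+* M, (∀ x, τ' (ψ x) = ψ ((τ ^ D) x)) ∧
      (∀ r, ψ (algebraMap R S r) = φ (algebraMap R S r)) ∧
      ∀ j, ∀ x ∈ Algebra.adjoin R (Set.range (window y (m + 1) 0)),
        ψ ((τ ^ j) x) = (τ' ^ (j / D)) (φ ((τ ^ (j % D)) x)) := by
  let := (φ.comp (algebraMap R S)).toAlgebra
  let θ (j : ℕ) : S →+* M := ((τ' ^ (j / D)).comp φ).comp (τ ^ (j % D))
  have hφR (r) : τ' (algebraMap R M r) = algebraMap R M ((σ ^ D) r) :=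
    (hφ _ (algebraMap_mem _ r)).trans (congrArg φ (pow_apply_of_semiconj h.map_algebraMap D r))
  have hθR (j r) : θ j (algebraMap R S r) = algebraMap R M ((σ ^ j) r) := by
    conv_rhs => rw [← Nat.mod_add_div j D, add_comm, pow_add, pow_mul]
    refine (congrArg (fun x ↦ (τ' ^ (j / D)) (φ x))
      (pow_apply_of_semiconj h.map_algebraMap (j % D) r)).trans ?_
    exact pow_apply_of_semiconj hφR (j / D) _
  have hα (k) (hk : k ≤ m + D) : periodicSeq τ' D (fun k ↦ φ (y k)) k = φ (y k) :=
    periodicSeq_eq hD (fun k hk ↦ (hφ _ (Algebra.subset_adjoin ⟨⟨k, by omega⟩, rfl⟩)).trans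
      (congrArg φ (h.pow_gen D k))) hk
  have hθy (j i) (hi : i ≤ m) : θ j (y i) = periodicSeq τ' D (fun k ↦ φ (y k)) (i + j) := by
    have hlt := Nat.mod_lt j hD
    conv_rhs => rw [← Nat.mod_add_div j D, ← add_assoc, periodicSeq_add_mul _ hD, hα _ (by omega)]
    exact congrArg (fun x ↦ (τ' ^ (j / D)) (φ x)) (h.pow_gen _ _)
  obtain ⟨ψ, hψ⟩ := h.exists_algHom_of_isMinimalRelation hτ hgen hG hθR hθy
    fun j ↦ (map_ne_zero (τ' ^ (j / D))).mpr (hlc _)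
  refine ⟨ψ, fun x ↦ ?_, ψ.commutes, fun j x hx ↦ ?_⟩
  · refine eq_of_mem_adjoin (f := τ'.comp ψ) (g := (ψ : S →+* M).comp (τ ^ D)) (fun r ↦ ?_) ?_
      (hgen.ge (Algebra.mem_top (x := x)))
    · exact (congrArg τ' (ψ.commutes r)).trans ((hφR r).trans
        ((congrArg ψ (pow_apply_of_semiconj h.map_algebraMap D r)).trans (ψ.commutes _)).symm)
    · rintro _ ⟨i, rfl⟩
      have := periodicSeq_add_mul τ' hD (fun k ↦ φ (y k)) i 1
      rw [mul_one, pow_one, ← hψ, ← hψ, ← h.pow_gen D] at this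
      exact this.symm
  · refine eq_of_mem_adjoin (f := (ψ : S →+* M).comp (τ ^ j)) (g := θ j) (fun r ↦ ?_) ?_ hx
    · exact (congrArg ψ (pow_apply_of_semiconj h.map_algebraMap j r)).trans
        ((ψ.commutes _).trans (hθR j r).symm)
    · rintro _ ⟨i, rfl⟩
      exact (congrArg ψ (h.pow_gen j i)).trans ((hψ _).trans (hθy j i (by omega)).symm)

theorem IsShift.exists_prime_comap_pow_eq {Q : Ideal S} [Q.IsPrime]
    (hlc : ∀ j, (τ ^ j) (MvPolynomial.aeval (window y m 0) G.leadingCoeff) ∉ Q)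
    (hQ : ∀ x ∈ Algebra.adjoin R (Set.range (window y (m + 1) 0)), (τ ^ D) x ∈ Q ↔ x ∈ Q) :
    ∃ q' : Ideal S, q'.IsPrime ∧ q'.comap (τ ^ D) = q' ∧ q'.under R = Q.under R ∧
      ∀ s ∈ Algebra.adjoin R (Set.range (window y (m + 1) 0)),
        (∀ j, (τ ^ j) s ∉ Q) → ∀ j, (τ ^ j) s ∉ q' := by
  let A := Algebra.adjoin R (Set.range (window y (m + 1) 0))
  let κ := A ⧸ Q.under A
  have hA (a : A) : IsAlgebraic κ (Ideal.Quotient.mk Q (a : S)) :=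
    isAlgebraic_algebraMap (Ideal.Quotient.mk (Q.under A) a)
  have : Algebra.IsAlgebraic κ (S ⧸ Q) := by
    refine ⟨fun x ↦ ?_⟩
    obtain ⟨x, rfl⟩ := Ideal.Quotient.mk_surjective x
    exact h.isAlgebraic_map hgen hG.evalOver_eq_zero
      (fun j ↦ Ideal.Quotient.eq_zero_iff_mem.not.mpr (hlc j)) (fun r ↦ hA (algebraMap R A r))
      (fun i hi ↦ hA ⟨y i, Algebra.subset_adjoin ⟨⟨i, hi.trans m.lt_succ_self⟩, rfl⟩⟩) x
  obtain ⟨M, _, _, φ, τ', hφ, hτ'⟩ := exists_isAlgClosed_ringHom_comp_eq (P := Q.under A) (Q := Q)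
    (τ := (τ ^ D).comp (algebraMap A S)) (Ideal.ext fun a ↦ hQ a a.2)
  have hφ_iff (x) : φ x = 0 ↔ x ∈ Q := by rw [← hφ, RingHom.mem_ker]
  obtain ⟨ψ, hψτ, hψR, hψ⟩ := h.exists_ringHom_comp_pow hτ hgen hG hD (φ := φ) (τ' := τ')
    (fun x hx ↦ hτ' ⟨x, hx⟩) (fun j ↦ (hφ_iff _).not.mpr (hlc j))
  refine ⟨RingHom.ker ψ, RingHom.ker_isPrime ψ, ?_, ?_, fun s hs hsQ j ↦ ?_⟩
  · ext x
    rw [Ideal.mem_comap, RingHom.mem_ker, ← hψτ, map_eq_zero, RingHom.mem_ker]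
  · ext r
    rw [Ideal.mem_under, Ideal.mem_under, RingHom.mem_ker, hψR, hφ_iff]
  · rw [RingHom.mem_ker, hψ j s hs, map_eq_zero, hφ_iff]
    exact hsQ _

end PeriodicPrime

/-- Prime ideals which are periodic under `σ` lift to periodic prime ideals, provided that they
avoid the orbit of some nonzero `r`. Avoiding the orbit of a prescribed `s` makes the property
stable under composition. -/
def LiftsPrimes {R S : Type*} [CommRing R] [CommRing S] [Algebra R S] (σ : R →+* R)
    (τ : S →+* S) : Prop :=
  ∀ s : S, s ≠ 0 → ∃ r : R, r ≠ 0 ∧ ∃ l : ℕ, 0 < l ∧ ∀ d : ℕ, 0 < d →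
    ∀ q : Ideal R, q.IsPrime → q.comap (σ ^ d) = q → (∀ n, (σ ^ n) r ∉ q) →
      ∃ q' : Ideal S, q'.IsPrime ∧ q'.comap (τ ^ (l * d)) = q' ∧ q'.under R = q ∧
        ∀ n, (τ ^ n) s ∉ q'

theorem LiftsPrimes.trans {R A S : Type*} [CommRing R] [CommRing A] [CommRing S] [Algebra R A]
    [Algebra A S] [Algebra R S] [IsScalarTower R A S] {σ : R →+* R} {ρ : A →+* A} {τ : S →+* S}
    (h : LiftsPrimes σ ρ) (h' : LiftsPrimes ρ τ) : LiftsPrimes σ τ := by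
  intro s hs
  obtain ⟨a, ha, l', hl', H'⟩ := h' s hs
  obtain ⟨r, hr, l, hl, H⟩ := h a ha
  refine ⟨r, hr, l' * l, Nat.mul_pos hl' hl, fun d hd q hq hqd hqr ↦ ?_⟩
  obtain ⟨p, hp, hpd, rfl, hpa⟩ := H d hd q hq hqd hqr
  obtain ⟨q', hq', hqd', rfl, hqs⟩ := H' (l * d) (Nat.mul_pos hl hd) p hp hpd hpa
  exact ⟨q', hq', by rwa [mul_assoc], (Ideal.under_under q').symm, hqs⟩

section Shift

variable {R S : Type*} [CommRing R] [CommRing S] [Algebra R S] {σ : R →+* R} {τ : S →+* S}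

theorem LiftsPrimes.of_subalgebra (hτ : ∀ r, τ (algebraMap R S r) = algebraMap R S (σ r))
    (hinj : Function.Injective τ) (A : Subalgebra R S) {ρ : A →+* A}
    (hρ : ∀ a : A, τ a = ρ a) {j : ℕ} (hj : ∀ x, (τ ^ j) x ∈ A)
    (h : LiftsPrimes σ ρ) : LiftsPrimes σ τ := by
  intro s hs
  let θ : S →+* A := (τ ^ j).codRestrict A hj
  have hθ (i : ℕ) (x : S) : ((ρ ^ i) (θ x) : S) = (τ ^ (i + j)) x := by
    rw [pow_add]
    exact (pow_apply_of_semiconj (f := (A.subtype : A →+* S)) hρ i (θ x)).symm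
  have hcomm (i n : ℕ) (x : S) : (ρ ^ i) (θ ((τ ^ n) x)) = (ρ ^ n) ((ρ ^ i) (θ x)) := by
    refine Subtype.ext ?_
    rw [← RingHom.comp_apply (ρ ^ n), ← RingHom.mul_def, ← pow_add, hθ, hθ, ← RingHom.comp_apply,
      ← RingHom.mul_def, ← pow_add]
    congr 2
    omega
  have hθs : θ s ≠ 0 := fun h0 ↦ hs <|
    (map_eq_zero_iff (τ ^ j) (by simpa using hinj.iterate j)).mp (congrArg Subtype.val h0)
  obtain ⟨r, hr, l, hl, H⟩ := h (θ s) hθs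
  refine ⟨r, hr, l, hl, fun d hd q hq hqd hqr ↦ ?_⟩
  obtain ⟨Q, hQ, hQd, rfl, hQs⟩ := H d hd q hq hqd hqr
  obtain ⟨i, hi⟩ := Nat.exists_eq_add_of_le' (Nat.le_mul_of_pos_left j hd)
  refine ⟨Q.comap ((ρ ^ i).comp θ), inferInstance, Ideal.ext fun x ↦ ?_, Ideal.ext fun r ↦ ?_,
    fun n hn ↦ hQs (n + i) ?_⟩
  · rw [Ideal.mem_comap, Ideal.mem_comap, RingHom.comp_apply, hcomm, ← Ideal.mem_comap, hQd]
    rfl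
  · have hθr : (ρ ^ i) (θ (algebraMap R S r)) = algebraMap R A ((σ ^ (d * j)) r) :=
      Subtype.ext <| by rw [hθ, ← hi, pow_apply_of_semiconj hτ]; rfl
    rw [Ideal.mem_under, Ideal.mem_comap, RingHom.comp_apply, hθr, ← Ideal.mem_under,
      ← Ideal.mem_comap, comap_pow_mul_eq hqd]
  · rw [Ideal.mem_comap, RingHom.comp_apply, hcomm] at hn
    rwa [pow_add]

theorem map_mem_adjoin (hτ : ∀ r, τ (algebraMap R S r) = algebraMap R S (σ r)) {s t : Set S}
    (hst : ∀ x ∈ s, τ x ∈ Algebra.adjoin R t) {x : S} (hx : x ∈ Algebra.adjoin R s) :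
    τ x ∈ Algebra.adjoin R t := by
  induction hx using Algebra.adjoin_induction with
  | mem x hx => exact hst x hx
  | algebraMap r => exact hτ r ▸ algebraMap_mem _ _
  | add x y _ _ hx hy => exact map_add τ x y ▸ add_mem hx hy
  | mul x y _ _ hx hy => exact map_mul τ x y ▸ mul_mem hx hy

variable {y : ℕ → S} (h : IsShift σ τ y)
include h

theorem IsShift.map_mem_adjoin_range {x : S} (hx : x ∈ Algebra.adjoin R (Set.range y)) :
    τ x ∈ Algebra.adjoin R (Set.range y) :=
  map_mem_adjoin h.map_algebraMap
    (Set.forall_mem_range.mpr fun k ↦ h.map_gen k ▸ Algebra.subset_adjoin ⟨k + 1, rfl⟩) hx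

theorem IsShift.restrict : IsShift σ
    (τ.restrict (Algebra.adjoin R (Set.range y)) (Algebra.adjoin R (Set.range y))
      fun _ ↦ h.map_mem_adjoin_range)
    fun k ↦ ⟨y k, Algebra.subset_adjoin ⟨k, rfl⟩⟩ where
  map_algebraMap r := Subtype.ext (h.map_algebraMap r)
  map_gen k := Subtype.ext (h.map_gen k)

theorem IsShift.tail (j : ℕ) : IsShift σ τ fun k ↦ y (k + j) where
  map_algebraMap := h.map_algebraMap
  map_gen k := by rw [h.map_gen, add_right_comm]

end Shift

section Generator

variable {R S : Type*} [CommRing R] [CommRing S] [Algebra R S] {y : ℕ → S}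

theorem exists_mem_adjoin_window (hgen : Algebra.adjoin R (Set.range y) = ⊤) (s : S) :
    ∃ k, s ∈ Algebra.adjoin R (Set.range (window y k 0)) := by
  obtain ⟨p, rfl⟩ := (Algebra.adjoin_range_eq_range_aeval R y).le
    (hgen.ge (Algebra.mem_top (x := s)))
  obtain ⟨k, p, rfl⟩ := exists_rename_val_eq p
  exact ⟨k, (Algebra.adjoin_range_eq_range_aeval R _).ge
    ⟨p, (MvPolynomial.aeval_rename _ _ p).symm⟩⟩

variable {σ : R →+* R} {τ : S →+* S} (h : IsShift σ τ y)
include h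

theorem IsShift.liftsPrimes_of_isRelation [IsDomain S] (hτ : Function.Injective τ)
    (hgen : Algebra.adjoin R (Set.range y) = ⊤) {n : ℕ}
    (hind : AlgebraicIndependent R (window y n 0)) {f : (MvPolynomial (Fin n) R)[X]}
    (hf : IsRelation y n f)
    (h0 : IsAlgebraic (Algebra.adjoin R (Set.range (window y n 1))) (y 0)) :
    LiftsPrimes σ τ := by
  intro s hs
  obtain ⟨k, hk⟩ := exists_mem_adjoin_window hgen s
  obtain ⟨m, hkm, G, hG⟩ := h.exists_isMinimalRelation hτ hf k
  obtain ⟨p, hp, N, hN⟩ := h.exists_bound_periodic hτ hgen hf.evalOver_eq_zero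
    hf.leadingCoeff_ne_zero (m + 1)
  obtain ⟨r, hr, H⟩ := h.exists_prime_isGenericAlong_notMem hτ hgen hf.evalOver_eq_zero
    hf.leadingCoeff_ne_zero hind h0 (mul_ne_zero (mul_ne_zero hG.leadingCoeff_ne_zero hs) hp)
  refine ⟨r, hr, N.factorial, N.factorial_pos, fun d hd q hq hqd hqr ↦ ?_⟩
  obtain ⟨Q, hQ, rfl, hgeneric, hQx⟩ := H q hq hqr
  simp only [map_mul, hQ.mul_mem_iff_mem_or_mem, not_or] at hQx
  obtain ⟨i, D, hD, hDN, hper⟩ := hN Q hQ (hQx 0).2 hgeneric d hqd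
  have hcomap {x : S} (hx : ∀ j, (τ ^ j) x ∉ Q) (j : ℕ) :
      (τ ^ j) x ∉ Q.comap (τ ^ (d * i)) := by
    rw [Ideal.mem_comap, ← RingHom.comp_apply, ← RingHom.mul_def, ← pow_add]
    exact hx _
  obtain ⟨q', hq', hq'D, hq'R, hq's⟩ := h.exists_prime_comap_pow_eq hτ hgen hG
    (Nat.mul_pos hd hD) (hcomap fun j ↦ (hQx j).1.1) hper
  obtain ⟨c, hc⟩ := Nat.dvd_factorial hD hDN
  refine ⟨q', hq', ?_, hq'R.trans (Ideal.ext fun r ↦ ?_),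
    hq's s (Algebra.adjoin_mono (range_window_mono (by omega)) hk) (hcomap fun j ↦ (hQx j).1.2)⟩
  · rw [hc, mul_right_comm, mul_comm D]
    exact comap_pow_mul_eq hq'D c
  · rw [Ideal.mem_under, Ideal.mem_comap, pow_apply_of_semiconj h.map_algebraMap,
      ← Ideal.mem_under, ← Ideal.mem_comap, comap_pow_mul_eq hqd]

theorem IsShift.liftsPrimes_of_algebraicIndependent
    (hgen : Algebra.adjoin R (Set.range y) = ⊤) (hind : AlgebraicIndependent R y) :
    LiftsPrimes σ τ := by
  have hsurj : Function.Surjective (MvPolynomial.aeval (R := R) y) := by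
    rw [← AlgHom.range_eq_top, ← Algebra.adjoin_range_eq_range_aeval, hgen]
  let E : MvPolynomial ℕ R ≃ₐ[R] S := AlgEquiv.ofBijective (MvPolynomial.aeval y) ⟨hind, hsurj⟩
  intro s hs
  obtain ⟨p, rfl⟩ := E.surjective s
  obtain ⟨m, hm⟩ := MvPolynomial.ne_zero_iff.mp ((map_ne_zero_iff E E.injective).mp hs)
  refine ⟨p.coeff m, hm, 1, one_pos, fun d _ q hq hqd hqr ↦ ?_⟩
  let Q : Ideal S := RingHom.ker ((MvPolynomial.map (σ := ℕ) (Ideal.Quotient.mk q)).comp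
    (E.symm : S →+* MvPolynomial ℕ R))
  have hQ (p : MvPolynomial ℕ R) : E p ∈ Q ↔ MvPolynomial.map (Ideal.Quotient.mk q) p = 0 := by
    rw [RingHom.mem_ker, RingHom.comp_apply, RingHom.coe_coe, E.symm_apply_apply]
  have hQτ (j : ℕ) (p : MvPolynomial ℕ R) :
      (τ ^ j) (E p) ∈ Q ↔ ∀ d, (σ ^ j) (p.coeff d) ∈ q := by
    have hE : (τ ^ j) (E p) = E (.rename (· + j) (.map (σ ^ j) p)) :=
      (map_aeval_of_semilinear (pow_apply_of_semiconj h.map_algebraMap j) y p).trans <|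
        (congrArg (MvPolynomial.aeval · _) (funext (h.pow_gen j))).trans
          (MvPolynomial.aeval_rename _ _ _).symm
    rw [hE, hQ, MvPolynomial.map_rename,
      map_eq_zero_iff _ (MvPolynomial.rename_injective _ (add_left_injective j)),
      ← RingHom.mem_ker, mem_ker_map_mk_iff]
    simp only [MvPolynomial.coeff_map]
  refine ⟨Q, RingHom.ker_isPrime _, Ideal.ext fun x ↦ ?_, Ideal.ext fun r ↦ ?_, fun n hn ↦
    hqr n ((hQτ n p).mp hn m)⟩
  · obtain ⟨p, rfl⟩ := E.surjective x
    rw [one_mul, Ideal.mem_comap, hQτ]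
    refine Iff.trans (forall_congr' fun m ↦ ?_) (hQτ 0 p).symm
    exact (congrArg (p.coeff m ∈ ·) hqd).to_iff
  · rw [Ideal.mem_under, ← E.commutes, MvPolynomial.algebraMap_eq, hQ, MvPolynomial.map_C,
      map_eq_zero_iff _ (MvPolynomial.C_injective _ _), Ideal.Quotient.eq_zero_iff_mem]

theorem IsShift.liftsPrimes_of_not_algebraicIndependent [IsDomain S] (hτ : Function.Injective τ)
    (hgen : Algebra.adjoin R (Set.range y) = ⊤) {n : ℕ}
    (hind : ∀ k, AlgebraicIndependent R (window y n k))
    (hdep : ¬ AlgebraicIndependent R (window y (n + 1) 0)) : LiftsPrimes σ τ := by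
  have h0 := hdep
  rw [algebraicIndependent_iff_transcendental_last (z := window y (n + 1) 0) (hind 0),
    Transcendental, not_not] at hdep
  have htail : Fin.tail (window y (n + 1) 0) = window y n 1 := rfl
  rw [algebraicIndependent_iff_transcendental_zero (htail ▸ hind 1), htail, Transcendental,
    not_not] at h0
  obtain ⟨f, hf, hlc⟩ := exists_evalOver_eq_zero_leadingCoeff hdep
  exact h.liftsPrimes_of_isRelation hτ hgen (hind 0) ⟨hlc, hf⟩ h0

end Generator

section Orbit

theorem exists_forall_algebraicIndependent_window {R S : Type*} [CommRing R] [CommRing S]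
    [Algebra R S] {y : ℕ → S} (hRS : Function.Injective (algebraMap R S))
    (hy : ¬ AlgebraicIndependent R y) :
    ∃ n j, (∀ k, AlgebraicIndependent R (window y n k)) ∧
      ¬ AlgebraicIndependent R (window y (n + 1) j) := by
  classical
  have hex : ∃ n, ¬ ∀ j, AlgebraicIndependent R (window y (n + 1) j) := by
    by_contra! h
    refine hy (algebraicIndependent_of_finite_type fun t ht ↦ ?_)
    obtain ⟨N, hN⟩ := ht.bddAbove
    exact (h N 0).comp (fun i : t ↦ (⟨i, Nat.lt_succ_of_le (hN i.2)⟩ : Fin (N + 1)))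
      fun a b hab ↦ Subtype.ext (congrArg Fin.val hab)
  obtain ⟨j, hj⟩ := not_forall.mp (Nat.find_spec hex)
  refine ⟨Nat.find hex, j, ?_, hj⟩
  cases hn : Nat.find hex with
  | zero => exact fun _ ↦ algebraicIndependent_empty_type_iff.mpr hRS
  | succ n => exact not_not.mp (Nat.find_min hex (hn ▸ n.lt_succ_self))

theorem IsShift.liftsPrimes {R S : Type*} [CommRing R] [CommRing S] [IsDomain S] [Algebra R S]
    {σ : R →+* R} {τ : S →+* S} {y : ℕ → S} (h : IsShift σ τ y) (hτ : Function.Injective τ)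
    (hRS : Function.Injective (algebraMap R S)) (hgen : Algebra.adjoin R (Set.range y) = ⊤) :
    LiftsPrimes σ τ := by
  by_cases hind : AlgebraicIndependent R y
  · exact h.liftsPrimes_of_algebraicIndependent hgen hind
  obtain ⟨n, j, hn, hj⟩ := exists_forall_algebraicIndependent_window hRS hind
  let A := Algebra.adjoin R (Set.range fun k ↦ y (k + j))
  let z (k : ℕ) : A := ⟨y (k + j), Algebra.subset_adjoin ⟨k, rfl⟩⟩
  have hz {m k i : ℕ} (hki : k + j = i) :
      AlgebraicIndependent R (window z m k) ↔ AlgebraicIndependent R (window y m i) := by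
    rw [← A.val.algebraicIndependent_iff Subtype.val_injective,
      show A.val ∘ window z m k = window y m i from
        funext fun l ↦ hki ▸ congrArg y (add_assoc (l : ℕ) k j)]
  have hpow (x : S) : (τ ^ j) x ∈ A := by
    refine map_mem_adjoin (pow_apply_of_semiconj h.map_algebraMap j)
      (Set.forall_mem_range.mpr fun k ↦ ?_) (hgen.ge (Algebra.mem_top (x := x)))
    exact Algebra.subset_adjoin ⟨k, (h.pow_gen j k).symm⟩
  refine LiftsPrimes.of_subalgebra h.map_algebraMap hτ A (fun _ ↦ rfl) hpow
    ((h.tail j).restrict.liftsPrimes_of_not_algebraicIndependent ?_ (adjoin_range_mk_eq_top _)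
      (fun k ↦ (hz rfl).mpr (hn (k + j))) ((hz (zero_add j)).not.mpr hj))
  exact fun a b hab ↦ Subtype.ext (hτ (congrArg Subtype.val hab))

/-- The union of the forward orbits under `τ` of the elements of `T`. -/
def forwardOrbit {S : Type*} [CommRing S] (τ : S →+* S) (T : Set S) : Set S :=
  {x | ∃ t ∈ T, ∃ n, (τ ^ n) t = x}

theorem forwardOrbit_insert {S : Type*} [CommRing S] (τ : S →+* S) (t : S) (T : Set S) :
    forwardOrbit τ (insert t T) = (Set.range fun n ↦ (τ ^ n) t) ∪ forwardOrbit τ T := by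
  ext x
  simp [forwardOrbit]

theorem isShift_pow_apply {R S : Type*} [CommRing R] [CommRing S] [Algebra R S] {σ : R →+* R}
    {τ : S →+* S} (hτ : ∀ r, τ (algebraMap R S r) = algebraMap R S (σ r)) (t : S) :
    IsShift σ τ fun n ↦ (τ ^ n) t where
  map_algebraMap := hτ
  map_gen n := by rw [pow_succ', RingHom.mul_def, RingHom.comp_apply]

theorem liftsPrimes_of_finite {S : Type u} [CommRing S] [IsDomain S] {τ : S →+* S}
    (hτ : Function.Injective τ) {T : Set S} (hT : T.Finite) {R : Type u} [CommRing R]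
    [Algebra R S] (hRS : Function.Injective (algebraMap R S)) {σ : R →+* R}
    (hστ : ∀ r, τ (algebraMap R S r) = algebraMap R S (σ r))
    (hgen : Algebra.adjoin R (forwardOrbit τ T) = ⊤) : LiftsPrimes σ τ := by
  induction T, hT using Set.Finite.induction_on generalizing R with
  | empty =>
    refine (isShift_pow_apply hστ 0).liftsPrimes hτ hRS (top_unique (hgen.ge.trans ?_))
    exact Algebra.adjoin_mono fun x hx ↦ by simp [forwardOrbit] at hx
  | @insert t T _ _ ih =>
    have hshift := isShift_pow_apply hστ t
    let A := Algebra.adjoin R (Set.range fun n ↦ (τ ^ n) t)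
    have hA := hshift.restrict.liftsPrimes
      (fun a b hab ↦ Subtype.ext (hτ (congrArg Subtype.val hab)))
      (fun a b hab ↦ hRS (congrArg Subtype.val hab)) (adjoin_range_mk_eq_top _)
    refine hA.trans (ih (R := A) Subtype.val_injective (fun _ ↦ rfl) ?_)
    rw [forwardOrbit_insert, Algebra.adjoin_union_eq_adjoin_adjoin] at hgen
    exact Subalgebra.restrictScalars_injective R
      (hgen.trans (Subalgebra.restrictScalars_top R).symm)

end Orbit

section Quotient

theorem PseudoPrime.exists_prime_comap_eq_bot {S : Type*} [CommRing S] {σ : S →+* S}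
    {R : Type*} [CommRing R] [IsDomain R] {f : R →+* S} {m : ℕ} {p : Fin m → Ideal S}
    (hp : ∀ i, PseudoPrime σ (p i)) (hbot : (⨅ i, p i).comap f = ⊥) :
    ∃ Q : Ideal S, Q.IsPrime ∧ Q.comap f = ⊥ ∧ ∃ d, 0 < d ∧ Q.comap (σ ^ d) = Q := by
  have hinf : Finset.univ.inf (fun i ↦ (p i).comap f) ≤ (⊥ : Ideal R) := by
    rw [Finset.inf_univ_eq_iInf, ← Ideal.comap_iInf, hbot]
  obtain ⟨i, -, hi⟩ := (Ideal.isPrime_bot (α := R)).inf_le'.mp hinf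
  obtain ⟨d, hd, q, hq, hqd, hpq⟩ := hp i
  have hinf' : (Finset.range d).inf (fun j ↦ (q.comap (σ ^ j)).comap f) ≤ (⊥ : Ideal R) := by
    refine le_of_eq_of_le ?_ hi
    simp_rw [hpq, Finset.inf_eq_iInf, Ideal.comap_iInf]
  obtain ⟨j, -, hj⟩ := (Ideal.isPrime_bot (α := R)).inf_le'.mp hinf'
  refine ⟨q.comap (σ ^ j), inferInstance, le_bot_iff.mp hj, d, hd, ?_⟩
  rw [Ideal.comap_comap, ← RingHom.mul_def, ← pow_add, add_comm, pow_add, RingHom.mul_def,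
    ← Ideal.comap_comap, hqd]

variable {R S S' : Type*} [CommRing R] [CommRing S] [CommRing S'] [Algebra R S] [Algebra R S']
  {τ : S →+* S} {τ' : S' →+* S'} {π : S →ₐ[R] S'} {e : ℕ}

theorem pow_map_of_map_pow (hπ : ∀ x, τ' (π x) = π ((τ ^ e) x)) (n : ℕ) (x : S) :
    (τ' ^ n) (π x) = π ((τ ^ (e * n)) x) := by
  rw [pow_mul]
  exact pow_apply_of_semiconj (f := (π : S →+* S')) hπ n x

theorem adjoin_forwardOrbit_eq_top (hsurj : Function.Surjective π)
    (hπ : ∀ x, τ' (π x) = π ((τ ^ e) x)) (he : 0 < e) {T : Set S}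
    (hT : Algebra.adjoin R (forwardOrbit τ T) = ⊤) :
    Algebra.adjoin R (forwardOrbit τ' (Set.image2 (fun i t ↦ π ((τ ^ i) t)) (Set.Iio e) T)) =
      ⊤ := by
  rw [← AlgHom.range_eq_top] at hsurj
  rw [eq_top_iff, ← hsurj, ← Algebra.map_top, ← hT, AlgHom.map_adjoin]
  refine Algebra.adjoin_mono ?_
  rintro _ ⟨_, ⟨t, ht, n, rfl⟩, rfl⟩
  refine ⟨_, ⟨n % e, n.mod_lt he, t, ht, rfl⟩, n / e, ?_⟩
  rw [pow_map_of_map_pow hπ, ← RingHom.comp_apply (τ ^ _), ← RingHom.mul_def, ← pow_add,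
    Nat.div_add_mod]

theorem exists_lift_of_comap_eq_bot {R S : Type u} [CommRing R] [CommRing S] [Algebra R S]
    {σ : R →+* R} {τ : S →+* S} {Q : Ideal S} [Q.IsPrime] (hQR : Q.under R = ⊥) {e : ℕ}
    (he : 0 < e) (hQe : Q.comap (τ ^ e) = Q)
    (hτ : ∀ r, τ (algebraMap R S r) = algebraMap R S (σ r)) {T : Set S} (hT : T.Finite)
    (hgen : Algebra.adjoin R (forwardOrbit τ T) = ⊤) :
    ∃ r : R, r ≠ 0 ∧ ∃ l, 0 < l ∧ ∀ d, 0 < d → ∀ q : Ideal R, q.IsPrime → q.comap (σ ^ d) = q →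
      (∀ n, (σ ^ n) r ∉ q) →
      ∃ q' : Ideal S, q'.IsPrime ∧ q'.comap (τ ^ (l * d)) = q' ∧ q'.under R = q := by
  let π : S →ₐ[R] S ⧸ Q := Ideal.Quotient.mkₐ R Q
  let τ' : S ⧸ Q →+* S ⧸ Q := Ideal.quotientMap Q (τ ^ e) hQe.ge
  have hπ (x : S) : τ' (π x) = π ((τ ^ e) x) := Ideal.quotientMap_mk
  have hRS : Function.Injective (algebraMap R (S ⧸ Q)) := by
    rw [RingHom.injective_iff_ker_eq_bot, ← hQR, IsScalarTower.algebraMap_eq R S,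
      ← RingHom.comap_ker, Ideal.Quotient.algebraMap_eq, Ideal.mk_ker]
  have hlift : LiftsPrimes (σ ^ e) τ' :=
    liftsPrimes_of_finite (Ideal.quotientMap_injective' hQe.le)
      ((Set.finite_Iio e).image2 (fun i t ↦ π ((τ ^ i) t)) hT) hRS
      (fun r ↦ (hπ _).trans (congrArg π (pow_apply_of_semiconj hτ e r)))
      (adjoin_forwardOrbit_eq_top Ideal.Quotient.mk_surjective hπ he hgen)
  obtain ⟨r, hr, l, hl, H⟩ := hlift 1 one_ne_zero
  refine ⟨r, hr, e * l, Nat.mul_pos he hl, fun d hd q hq hqd hqr ↦ ?_⟩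
  obtain ⟨q', hq', hqd', rfl, -⟩ := H d hd q hq
    (by rw [← pow_mul, mul_comm]; exact comap_pow_mul_eq hqd e)
    fun n ↦ by rw [← pow_mul]; exact hqr _
  refine ⟨q'.comap π, inferInstance, Ideal.ext fun x ↦ ?_, rfl⟩
  rw [Ideal.mem_comap, Ideal.mem_comap, mul_assoc, ← pow_map_of_map_pow hπ, ← Ideal.mem_comap, hqd',
    Ideal.mem_comap]

end Quotient

/-- A difference analogue of Chevalley's theorem: let `R ⊆ S` be `σ`-rings with `S`
finitely `σ`-generated over `R`, `R` a `σ`-domain, and the zero ideal of `S` a finite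
intersection of `σ`-pseudo prime ideals.  Then there are `0 ≠ r ∈ R` and `l ≥ 1` such
that every `σ^d`-prime ideal `q` of `R` avoiding the `σ`-orbit of `r` lifts to a
`σ^{ld}`-prime ideal of `S`. -/
theorem sigma_chevalley
    {S : Type*} [CommRing S] (σ : S →+* S) (R : Subring S)
    (σR : ↥R →+* ↥R) (hσR : ∀ x : ↥R, (σR x : S) = σ ↑x)
    (hfin : ∃ T : Finset S,
      Subring.closure ((R : Set S) ∪ {x : S | ∃ t ∈ T, ∃ n : ℕ, (⇑σ)^[n] t = x}) = ⊤)
    (hdom : IsDomain ↥R) (hinj : Function.Injective σR)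
    (hzero : ∃ (m : ℕ) (p : Fin m → Ideal S), (∀ i, PseudoPrime σ (p i)) ∧ (⨅ i, p i) = ⊥) :
    ∃ r : ↥R, r ≠ 0 ∧ ∃ l : ℕ, 1 ≤ l ∧
      ∀ d : ℕ, 1 ≤ d → ∀ q : Ideal ↥R, q.IsPrime → Ideal.comap (σR ^ d) q = q →
        (∀ n : ℕ, (⇑σR)^[n] r ∉ q) →
        ∃ q' : Ideal S, q'.IsPrime ∧ Ideal.comap (σ ^ (l * d)) q' = q' ∧
          Ideal.comap R.subtype q' = q := by
  obtain ⟨m, p, hp, hpbot⟩ := hzero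
  obtain ⟨T, hT⟩ := hfin
  obtain ⟨Q, hQ, hQR, e, he, hQe⟩ := PseudoPrime.exists_prime_comap_eq_bot
    (f := algebraMap R S) hp
    (by rw [hpbot]; exact (RingHom.injective_iff_ker_eq_bot _).mp R.subtype_injective)
  have hgen : Algebra.adjoin R (forwardOrbit σ T) = ⊤ := by
    have hR : Set.range (algebraMap R S) = R := Subtype.range_coe
    refine Subalgebra.toSubring_injective (Eq.trans ?_ hT)
    rw [Algebra.adjoin_eq_ring_closure, hR]
    simp only [forwardOrbit, RingHom.coe_pow, Finset.mem_coe]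
  obtain ⟨r, hr, l, hl, H⟩ := exists_lift_of_comap_eq_bot hQR he hQe
    (fun r ↦ (hσR r).symm) T.finite_toSet hgen
  simpa only [RingHom.coe_pow] using ⟨r, hr, l, hl, H⟩
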